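/- Let 2 ≤ e < ∞, let κ ∈ Z^ℓ be a multicharge with κ_l − κ_{l+1} ≥ n for 1 ≤ l < ℓ, and let (O,t) be an e-idempotent subring of a field K. Let i ∈ I^n and let φ ∈ O[X_1,…,X_n] be a polynomial such that φ(t) := φ([c_1(t)]_t,…,[c_n(t)]_t) is a unit of O for every t ∈ Std(i). Then f_i^φ := Σ_{t ∈ Std(i)} φ(t)^{−1} F_t lies in the O-subalgebra L(O) of H_n(K,t,κ) generated by L_1,…,L_n; in particular f_i^φ lies in the image of H_n(O,t,κ). -/

import Mathlib

open scoped BigOperators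
open scoped Classical

namespace Paper

/-! ## Quantum integers -/

/-- The quantum integer `[d]_x` in a field, for `d ∈ ℤ`. -/
noncomputable def qint {K : Type*} [Field K] (x : K) (d : ℤ) : K :=
  if 0 ≤ d then ∑ k ∈ Finset.range d.toNat, x ^ k
  else -∑ k ∈ Finset.range (-d).toNat, x ^ (-((k : ℤ) + 1))

/-- The quantum integer `[d]_t` in a commutative ring, for an invertible `t` and `d ∈ ℤ`. -/
def qintU {O : Type*} [CommRing O] (t : Oˣ) (d : ℤ) : O :=
  if 0 ≤ d then ∑ k ∈ Finset.range d.toNat, (t : O) ^ k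
  else -∑ k ∈ Finset.range (-d).toNat, ((t ^ (-((k : ℤ) + 1)) : Oˣ) : O)

/-! ## Nodes, multipartitions and standard tableaux -/

/-- A node `(l, r, c)`: component `l`, row `r`, column `c` (all `0`-based). -/
abbrev Node : Type := ℕ × ℕ × ℕ

/-- `nodeBelow A B` holds when `B` is strictly below `A`, i.e. `A < B` lexicographically. -/
def nodeBelow (A B : Node) : Prop :=
  A.1 < B.1 ∨ (A.1 = B.1 ∧ (A.2.1 < B.2.1 ∨ (A.2.1 = B.2.1 ∧ A.2.2 < B.2.2)))

/-- An `ℓ`-multipartition of `n`. -/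
structure Multipartition (ℓ n : ℕ) : Type where
  part : ℕ → ℕ → ℕ
  comp_bound : ∀ l, ℓ ≤ l → ∀ r, part l r = 0
  antitone : ∀ l, Antitone (part l)
  row_bound : ∀ l r, n ≤ r → part l r = 0
  size : (∑ l ∈ Finset.range ℓ, ∑ r ∈ Finset.range n, part l r) = n

/-- The diagram of a multipartition. -/
def Multipartition.diagram {ℓ n : ℕ} (μ : Multipartition ℓ n) : Set Node :=
  {A | A.2.2 < μ.part A.1 A.2.1}

/-- A standard tableau: a bijection from the diagram of its shape onto `{1, …, n}`
that increases along rows and down columns of each component (it takes the value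
`0` off the diagram, so that it is determined by its entries). -/
structure StdTableau (ℓ n : ℕ) : Type where
  shape : Multipartition ℓ n
  entry : Node → ℕ
  entry_zero : ∀ A, A ∉ shape.diagram → entry A = 0
  bijOn : Set.BijOn entry shape.diagram (Set.Icc 1 n)
  row_inc : ∀ l r c, (l, r, c + 1) ∈ shape.diagram → entry (l, r, c) < entry (l, r, c + 1)
  col_inc : ∀ l r c, (l, r + 1, c) ∈ shape.diagram → entry (l, r, c) < entry (l, r + 1, c)

/-- The node of a standard tableau containing the entry `k`. -/
noncomputable def StdTableau.node {ℓ n : ℕ} (T : StdTableau ℓ n) (k : ℕ) : Node :=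
  Function.invFunOn T.entry T.shape.diagram k

/-- The content `c_k(T) = κ_l + c - r` of the entry `k` in the tableau `T`
(`1 ≤ k ≤ n`). -/
noncomputable def content {ℓ n : ℕ} (κ : ℕ → ℤ) (T : StdTableau ℓ n) (k : ℕ) : ℤ :=
  κ (T.node k).1 + ((T.node k).2.2 : ℤ) - ((T.node k).2.1 : ℤ)

/-- The residue sequence of a standard tableau, in `I^n` with `I = ℤ/eℤ`. -/
noncomputable def resSeq {ℓ n : ℕ} (e : ℕ) (κ : ℕ → ℤ) (T : StdTableau ℓ n) :
    Fin n → ZMod e :=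
  fun k => ((content κ T (k.1 + 1) : ℤ) : ZMod e)

/-- The residue of a node. -/
def resNode (e : ℕ) (κ : ℕ → ℤ) (A : Node) : ZMod e :=
  ((κ A.1 + (A.2.2 : ℤ) - (A.2.1 : ℤ) : ℤ) : ZMod e)

/-- A set of nodes is the diagram of a multipartition (with at most `ℓ` components)
iff it is finite and downward closed in rows and columns. -/
def IsDiagramSet (ℓ : ℕ) (S : Set Node) : Prop :=
  S.Finite ∧ (∀ A ∈ S, A.1 < ℓ) ∧
    (∀ l r c, (l, r, c + 1) ∈ S → (l, r, c) ∈ S) ∧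
    (∀ l r c, (l, r + 1, c) ∈ S → (l, r, c) ∈ S)

/-- `A` is an addable node of the diagram `S`. -/
def Addable (ℓ : ℕ) (S : Set Node) (A : Node) : Prop :=
  A ∉ S ∧ IsDiagramSet ℓ (S ∪ {A})

/-- `A` is a removable node of the diagram `S`. -/
def Removable (ℓ : ℕ) (S : Set Node) (A : Node) : Prop :=
  A ∈ S ∧ IsDiagramSet ℓ (S \ {A})

/-- `d_A(S)`: the number of addable nodes of `S` of the same residue as `A` strictly
below `A`, minus the number of removable ones. -/
noncomputable def dNode (ℓ e : ℕ) (κ : ℕ → ℤ) (S : Set Node) (A : Node) : ℤ :=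
  (Set.ncard {B | Addable ℓ S B ∧ resNode e κ B = resNode e κ A ∧ nodeBelow A B} : ℤ) -
    (Set.ncard {B | Removable ℓ S B ∧ resNode e κ B = resNode e κ A ∧ nodeBelow A B} : ℤ)

/-- The Brundan–Kleshchev–Wang degree `deg_e(T)` of a standard tableau, written as the
telescoping sum of the recursion `deg_e(T) = deg_e(T↓(n-1)) + d_A(Shape(T))`. -/
noncomputable def degE {ℓ n : ℕ} (e : ℕ) (κ : ℕ → ℤ) (T : StdTableau ℓ n) : ℤ :=
  ∑ m ∈ Finset.Icc 1 n,
    dNode ℓ e κ {A | A ∈ T.shape.diagram ∧ T.entry A ≤ m} (T.node m)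

/-- The restriction of the diagram of `T` to entries `≤ m` (the diagram of `Shape(T↓m)`). -/
def restDiag {ℓ n : ℕ} (T : StdTableau ℓ n) (m : ℕ) : Set Node :=
  {A | A ∈ T.shape.diagram ∧ T.entry A ≤ m}

/-- Dominance order on standard tableaux: `domTab S T` iff `S ⊵ T`. -/
def domTab {ℓ n : ℕ} (S T : StdTableau ℓ n) : Prop :=
  ∀ m l i : ℕ,
    Set.ncard {A | A ∈ restDiag T m ∧ (A.1 < l ∨ (A.1 = l ∧ A.2.1 ≤ i))} ≤
      Set.ncard {A | A ∈ restDiag S m ∧ (A.1 < l ∨ (A.1 = l ∧ A.2.1 ≤ i))}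

/-- Interchange the entries `r` and `r + 1` in an entry function. -/
def swapEntry (f : Node → ℕ) (r : ℕ) : Node → ℕ :=
  fun A => if f A = r then r + 1 else if f A = r + 1 then r else f A

/-- `ρ_r(T) = c_r(T) - c_{r+1}(T)`, the axial distance. -/
noncomputable def rhoTab {ℓ n : ℕ} (κ : ℕ → ℤ) (T : StdTableau ℓ n) (r : ℕ) : ℤ :=
  content κ T r - content κ T (r + 1)

/-- The entry function of the row-reading initial tableau `t^λ`. -/
noncomputable def tlamEntry {ℓ n : ℕ} (μ : Multipartition ℓ n) (A : Node) : ℕ :=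
  if A ∈ μ.diagram then
    (∑ l ∈ Finset.range A.1, ∑ r ∈ Finset.range n, μ.part l r) +
      (∑ r ∈ Finset.range A.2.1, μ.part A.1 r) + A.2.2 + 1
  else 0

/-- The finite set of possible contents of standard tableaux of size `n`. -/
noncomputable def contFinset (ℓ n : ℕ) (κ : ℕ → ℤ) : Finset ℤ :=
  ((Finset.range ℓ ×ˢ Finset.range n ×ˢ Finset.range n).image
      (fun x => κ x.1 + (x.2.2 : ℤ) - (x.2.1 : ℤ))).filter
    (fun c => ∃ T : StdTableau ℓ n, ∃ k, 1 ≤ k ∧ k ≤ n ∧ content κ T k = c)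

/-- The standard tableau (if any) obtained from `T` by interchanging the entries
`r` and `r + 1`; i.e. `T·s_r` if it is standard, and `none` otherwise. -/
noncomputable def oSwapO {ℓ n : ℕ} (T : StdTableau ℓ n) (r : ℕ) :
    Option (StdTableau ℓ n) :=
  if h : ∃ V : StdTableau ℓ n, V.entry = swapEntry T.entry r then some (Classical.choose h)
  else none

/-- `oSwap` extended to `Option`. -/
noncomputable def oSwap {ℓ n : ℕ} (X : Option (StdTableau ℓ n)) (r : ℕ) :
    Option (StdTableau ℓ n) :=
  X.bind fun T => oSwapO T r

/-- Evaluate a seminormal coefficient system on an optional tableau (by `0` if none). -/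
noncomputable def aE {ℓ n : ℕ} {K : Type*} [Field K] (α : ℕ → StdTableau ℓ n → K) (r : ℕ)
    (X : Option (StdTableau ℓ n)) : K :=
  X.elim 0 (α r)

/-! ## Separation and idempotent subrings -/

/-- `(K, t)` separates `Std(P_n)` (field version):
`[n]!_t ∏_{1 ≤ l < m ≤ ℓ} ∏_{-n < d < n} [κ_l - κ_m + d]_t ≠ 0`. -/
def SeparatesF {K : Type*} [Field K] (t : Kˣ) (n ℓ : ℕ) (κ : ℕ → ℤ) : Prop :=
  ((∏ d ∈ Finset.Icc 1 n, qint (t : K) (d : ℤ)) *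
      ∏ l ∈ Finset.range ℓ, ∏ m ∈ Finset.Ioo l ℓ,
        ∏ d ∈ Finset.Ioo (-(n : ℤ)) (n : ℤ), qint (t : K) (κ l - κ m + d)) ≠ 0

/-- `(O, t)` separates `Std(P_n)` (subring version): the separation element is a unit. -/
def SeparatesU {O : Type*} [CommRing O] (t : Oˣ) (n ℓ : ℕ) (κ : ℕ → ℤ) : Prop :=
  IsUnit ((∏ d ∈ Finset.Icc 1 n, qintU t (d : ℤ)) *
      ∏ l ∈ Finset.range ℓ, ∏ m ∈ Finset.Ioo l ℓ,
        ∏ d ∈ Finset.Ioo (-(n : ℤ)) (n : ℤ), qintU t (κ l - κ m + d))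

/-- `(O, t)` is an `e`-idempotent subring of the field `K`. -/
def IsIdempotentSubring {K : Type*} [Field K] (O : Subring K) (t : Oˣ) (e n ℓ : ℕ)
    (κ : ℕ → ℤ) : Prop :=
  SeparatesU t n ℓ κ ∧
    (∀ k : ℤ, ¬(e : ℤ) ∣ k → IsUnit (qintU t k)) ∧
    (∀ k : ℤ, (e : ℤ) ∣ k → qintU t k ∈ Ideal.jacobson (⊥ : Ideal O))

/-! ## The cyclotomic Hecke algebra, by generators and relations -/

/-- Generators `L_1, …, L_n`, `T_1, …, T_{n-1}` (here `0`-based). -/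
inductive HeckeGen (n : ℕ) : Type
  | L : Fin n → HeckeGen n
  | T : Fin (n - 1) → HeckeGen n

/-- The position `r` of the pair `(r, r+1)` interchanged by the `r`-th transposition. -/
def pL {n : ℕ} (r : Fin (n - 1)) : Fin n := ⟨r.1, by have := r.2; omega⟩

/-- The position `r + 1` of the pair interchanged by the `r`-th transposition. -/
def pR {n : ℕ} (r : Fin (n - 1)) : Fin n := ⟨r.1 + 1, by have := r.2; omega⟩

/-- The position `r + 2`, used in braid relations. -/
def pM {n : ℕ} (r : Fin (n - 1)) (hr : r.1 + 1 < n - 1) : Fin n := ⟨r.1 + 2, by omega⟩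

/-- The free algebra generator `L_k`. -/
def hL (R : Type*) [CommRing R] {n : ℕ} (k : Fin n) : FreeAlgebra R (HeckeGen n) :=
  FreeAlgebra.ι R (HeckeGen.L k)

/-- The free algebra generator `T_r`. -/
def hT (R : Type*) [CommRing R] {n : ℕ} (r : Fin (n - 1)) : FreeAlgebra R (HeckeGen n) :=
  FreeAlgebra.ι R (HeckeGen.T r)

/-- The defining relations of the integral cyclotomic Hecke algebra `H_n(R, t, κ)`. -/
inductive HeckeRel (R : Type*) [CommRing R] (t : Rˣ) (n ℓ : ℕ) (κ : ℕ → ℤ) :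
    FreeAlgebra R (HeckeGen n) → FreeAlgebra R (HeckeGen n) → Prop
  | cyc (h : 0 < n) :
      HeckeRel R t n ℓ κ
        (((List.range ℓ).map fun l =>
          hL R (⟨0, h⟩ : Fin n) - algebraMap R _ (qintU t (κ l))).prod) 0
  | quad (r : Fin (n - 1)) :
      HeckeRel R t n ℓ κ ((hT R r + 1) * (hT R r - algebraMap R _ (t : R))) 0
  | LL (k m : Fin n) : HeckeRel R t n ℓ κ (hL R k * hL R m) (hL R m * hL R k)
  | TTfar (r s : Fin (n - 1)) (h : r.1 + 1 < s.1 ∨ s.1 + 1 < r.1) :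
      HeckeRel R t n ℓ κ (hT R r * hT R s) (hT R s * hT R r)
  | braid (r s : Fin (n - 1)) (h : s.1 = r.1 + 1) :
      HeckeRel R t n ℓ κ (hT R r * hT R s * hT R r) (hT R s * hT R r * hT R s)
  | TL (r : Fin (n - 1)) (k : Fin n) (h : k.1 ≠ r.1 ∧ k.1 ≠ r.1 + 1) :
      HeckeRel R t n ℓ κ (hT R r * hL R k) (hL R k * hT R r)
  | LT (r : Fin (n - 1)) :
      HeckeRel R t n ℓ κ (hL R (pR r) * (hT R r - algebraMap R _ (t : R) + 1))
        (hT R r * hL R (pL r) + 1)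

/-- The integral cyclotomic Hecke algebra of type `A`, `H_n(R, t, κ)`. -/
noncomputable abbrev CycHecke (R : Type*) [CommRing R] (t : Rˣ) (n ℓ : ℕ) (κ : ℕ → ℤ) :
    Type _ :=
  RingQuot (HeckeRel R t n ℓ κ)

/-- The generator `L_k` of the cyclotomic Hecke algebra. -/
noncomputable def Lgen (R : Type*) [CommRing R] (t : Rˣ) (n ℓ : ℕ) (κ : ℕ → ℤ)
    (k : Fin n) : CycHecke R t n ℓ κ :=
  RingQuot.mkAlgHom R (HeckeRel R t n ℓ κ) (hL R k)

/-- The generator `T_r` of the cyclotomic Hecke algebra. -/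
noncomputable def Tgen (R : Type*) [CommRing R] (t : Rˣ) (n ℓ : ℕ) (κ : ℕ → ℤ)
    (r : Fin (n - 1)) : CycHecke R t n ℓ κ :=
  RingQuot.mkAlgHom R (HeckeRel R t n ℓ κ) (hT R r)

end Paper
/-! ## Quiver Hecke (KLR) algebras, by generators and relations -/

namespace Paper

/-- Generators `e(i)` (`i ∈ I^n`), `ψ_1, …, ψ_{n-1}`, `y_1, …, y_n` (here `0`-based). -/
inductive KLRGen (n e : ℕ) : Type
  | idem : (Fin n → ZMod e) → KLRGen n e
  | psi : Fin (n - 1) → KLRGen n e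
  | y : Fin n → KLRGen n e

/-- The free algebra generator `e(i)`. -/
def kE (R : Type*) [CommRing R] {n e : ℕ} (i : Fin n → ZMod e) :
    FreeAlgebra R (KLRGen n e) :=
  FreeAlgebra.ι R (KLRGen.idem i)

/-- The free algebra generator `ψ_r`. -/
def kPsi (R : Type*) [CommRing R] {n e : ℕ} (r : Fin (n - 1)) :
    FreeAlgebra R (KLRGen n e) :=
  FreeAlgebra.ι R (KLRGen.psi r)

/-- The free algebra generator `y_k`. -/
def kY (R : Type*) [CommRing R] {n e : ℕ} (k : Fin n) : FreeAlgebra R (KLRGen n e) :=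
  FreeAlgebra.ι R (KLRGen.y k)

/-- `s_r · i`: interchange the entries of `i` at positions `r` and `r + 1`. -/
def swapSeq {n e : ℕ} (i : Fin n → ZMod e) (r : Fin (n - 1)) : Fin n → ZMod e :=
  fun k => if k = pL r then i (pR r) else if k = pR r then i (pL r) else i k

/-- The defining relations of the cyclotomic quiver Hecke algebra `R_n^Λ(R)` where
`Λ = Σ_l Λ_{κ_l mod e}`. -/
inductive KLRRel (R : Type*) [CommRing R] (n e ℓ : ℕ) [NeZero e] (κ : ℕ → ℤ) :
    FreeAlgebra R (KLRGen n e) → FreeAlgebra R (KLRGen n e) → Prop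
  | cyc (h : 0 < n) (i : Fin n → ZMod e) :
      KLRRel R n e ℓ κ
        ((kY R (⟨0, h⟩ : Fin n)) ^
            (((Finset.range ℓ).filter fun l => ((κ l : ZMod e) = i ⟨0, h⟩)).card) *
          kE R i) 0
  | orth (i j : Fin n → ZMod e) (h : i ≠ j) : KLRRel R n e ℓ κ (kE R i * kE R j) 0
  | idem (i : Fin n → ZMod e) : KLRRel R n e ℓ κ (kE R i * kE R i) (kE R i)
  | complete : KLRRel R n e ℓ κ (∑ i : Fin n → ZMod e, kE R i) 1
  | yE (k : Fin n) (i : Fin n → ZMod e) :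
      KLRRel R n e ℓ κ (kY R k * kE R i) (kE R i * kY R k)
  | psiE (r : Fin (n - 1)) (i : Fin n → ZMod e) :
      KLRRel R n e ℓ κ (kPsi R r * kE R i) (kE R (swapSeq i r) * kPsi R r)
  | yy (k m : Fin n) : KLRRel R n e ℓ κ (kY R k * kY R m) (kY R m * kY R k)
  | psiyEq (r : Fin (n - 1)) (i : Fin n → ZMod e) (h : i (pL r) = i (pR r)) :
      KLRRel R n e ℓ κ (kPsi R r * kY R (pR r) * kE R i)
        ((kY R (pL r) * kPsi R r + 1) * kE R i)
  | psiyNe (r : Fin (n - 1)) (i : Fin n → ZMod e) (h : i (pL r) ≠ i (pR r)) :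
      KLRRel R n e ℓ κ (kPsi R r * kY R (pR r) * kE R i)
        (kY R (pL r) * kPsi R r * kE R i)
  | ypsiEq (r : Fin (n - 1)) (i : Fin n → ZMod e) (h : i (pL r) = i (pR r)) :
      KLRRel R n e ℓ κ (kY R (pR r) * kPsi R r * kE R i)
        ((kPsi R r * kY R (pL r) + 1) * kE R i)
  | ypsiNe (r : Fin (n - 1)) (i : Fin n → ZMod e) (h : i (pL r) ≠ i (pR r)) :
      KLRRel R n e ℓ κ (kY R (pR r) * kPsi R r * kE R i)
        (kPsi R r * kY R (pL r) * kE R i)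
  | psiyFar (r : Fin (n - 1)) (k : Fin n) (h : k.1 ≠ r.1 ∧ k.1 ≠ r.1 + 1) :
      KLRRel R n e ℓ κ (kPsi R r * kY R k) (kY R k * kPsi R r)
  | psipsiFar (r s : Fin (n - 1)) (h : r.1 + 1 < s.1 ∨ s.1 + 1 < r.1) :
      KLRRel R n e ℓ κ (kPsi R r * kPsi R s) (kPsi R s * kPsi R r)
  | quadEq (r : Fin (n - 1)) (i : Fin n → ZMod e) (h : i (pL r) = i (pR r)) :
      KLRRel R n e ℓ κ (kPsi R r ^ 2 * kE R i) 0
  | quadR (r : Fin (n - 1)) (i : Fin n → ZMod e)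
      (h1 : i (pR r) = i (pL r) + 1) (h2 : i (pL r) ≠ i (pR r) + 1) :
      KLRRel R n e ℓ κ (kPsi R r ^ 2 * kE R i) ((kY R (pL r) - kY R (pR r)) * kE R i)
  | quadL (r : Fin (n - 1)) (i : Fin n → ZMod e)
      (h1 : i (pL r) = i (pR r) + 1) (h2 : i (pR r) ≠ i (pL r) + 1) :
      KLRRel R n e ℓ κ (kPsi R r ^ 2 * kE R i) ((kY R (pR r) - kY R (pL r)) * kE R i)
  | quadBoth (r : Fin (n - 1)) (i : Fin n → ZMod e)
      (h1 : i (pR r) = i (pL r) + 1) (h2 : i (pL r) = i (pR r) + 1) :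
      KLRRel R n e ℓ κ (kPsi R r ^ 2 * kE R i)
        ((kY R (pR r) - kY R (pL r)) * (kY R (pL r) - kY R (pR r)) * kE R i)
  | quadNone (r : Fin (n - 1)) (i : Fin n → ZMod e) (h1 : i (pL r) ≠ i (pR r))
      (h2 : i (pR r) ≠ i (pL r) + 1) (h3 : i (pL r) ≠ i (pR r) + 1) :
      KLRRel R n e ℓ κ (kPsi R r ^ 2 * kE R i) (kE R i)
  | braidR (r : Fin (n - 1)) (hr : r.1 + 1 < n - 1) (i : Fin n → ZMod e)
      (h0 : i (pM r hr) = i (pL r)) (h1 : i (pR r) = i (pL r) + 1)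
      (h2 : i (pL r) ≠ i (pR r) + 1) :
      KLRRel R n e ℓ κ (kPsi R r * kPsi R ⟨r.1 + 1, hr⟩ * kPsi R r * kE R i)
        ((kPsi R ⟨r.1 + 1, hr⟩ * kPsi R r * kPsi R ⟨r.1 + 1, hr⟩ - 1) * kE R i)
  | braidL (r : Fin (n - 1)) (hr : r.1 + 1 < n - 1) (i : Fin n → ZMod e)
      (h0 : i (pM r hr) = i (pL r)) (h1 : i (pL r) = i (pR r) + 1)
      (h2 : i (pR r) ≠ i (pL r) + 1) :
      KLRRel R n e ℓ κ (kPsi R r * kPsi R ⟨r.1 + 1, hr⟩ * kPsi R r * kE R i)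
        ((kPsi R ⟨r.1 + 1, hr⟩ * kPsi R r * kPsi R ⟨r.1 + 1, hr⟩ + 1) * kE R i)
  | braidBoth (r : Fin (n - 1)) (hr : r.1 + 1 < n - 1) (i : Fin n → ZMod e)
      (h0 : i (pM r hr) = i (pL r)) (h1 : i (pR r) = i (pL r) + 1)
      (h2 : i (pL r) = i (pR r) + 1) :
      KLRRel R n e ℓ κ (kPsi R r * kPsi R ⟨r.1 + 1, hr⟩ * kPsi R r * kE R i)
        ((kPsi R ⟨r.1 + 1, hr⟩ * kPsi R r * kPsi R ⟨r.1 + 1, hr⟩ +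
            kY R (pL r) - 2 * kY R (pR r) + kY R (pM r hr)) * kE R i)
  | braidNone (r : Fin (n - 1)) (hr : r.1 + 1 < n - 1) (i : Fin n → ZMod e)
      (h : ¬(i (pM r hr) = i (pL r) ∧
        (i (pR r) = i (pL r) + 1 ∨ i (pL r) = i (pR r) + 1))) :
      KLRRel R n e ℓ κ (kPsi R r * kPsi R ⟨r.1 + 1, hr⟩ * kPsi R r * kE R i)
        (kPsi R ⟨r.1 + 1, hr⟩ * kPsi R r * kPsi R ⟨r.1 + 1, hr⟩ * kE R i)

/-- The cyclotomic quiver Hecke algebra `R_n^Λ(R)`, `Λ = Σ_l Λ_{κ_l mod e}`. -/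
noncomputable abbrev KLR (R : Type*) [CommRing R] (n e ℓ : ℕ) [NeZero e] (κ : ℕ → ℤ) :
    Type _ :=
  RingQuot (KLRRel R n e ℓ κ)

/-- The generator `e(i)` of the cyclotomic quiver Hecke algebra. -/
noncomputable def KeGen (R : Type*) [CommRing R] (n e ℓ : ℕ) [NeZero e] (κ : ℕ → ℤ)
    (i : Fin n → ZMod e) : KLR R n e ℓ κ :=
  RingQuot.mkAlgHom R (KLRRel R n e ℓ κ) (kE R i)

/-- The generator `ψ_r` of the cyclotomic quiver Hecke algebra. -/
noncomputable def KpsiGen (R : Type*) [CommRing R] (n e ℓ : ℕ) [NeZero e] (κ : ℕ → ℤ)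
    (r : Fin (n - 1)) : KLR R n e ℓ κ :=
  RingQuot.mkAlgHom R (KLRRel R n e ℓ κ) (kPsi R r)

/-- The generator `y_k` of the cyclotomic quiver Hecke algebra. -/
noncomputable def KyGen (R : Type*) [CommRing R] (n e ℓ : ℕ) [NeZero e] (κ : ℕ → ℤ)
    (k : Fin n) : KLR R n e ℓ κ :=
  RingQuot.mkAlgHom R (KLRRel R n e ℓ κ) (kY R k)

end Paper
/-! ## The deformed cyclotomic quiver Hecke algebra -/

namespace Paper

/-- `y_k^⟨d⟩ = t^d y_k + [d]_t` in the free algebra. -/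
def ydot (R : Type*) [CommRing R] (t : Rˣ) {n e : ℕ} (d : ℤ) (k : Fin n) :
    FreeAlgebra R (KLRGen n e) :=
  algebraMap R _ ((t ^ d : Rˣ) : R) * kY R k + algebraMap R _ (qintU t d)

/-- `ρ_r(i) = î_r - î_{r+1}` for `i ∈ I^n`. -/
def rhoI {n e : ℕ} (i : Fin n → ZMod e) (r : Fin (n - 1)) : ℤ :=
  ((i (pL r)).val : ℤ) - ((i (pR r)).val : ℤ)

/-- The defining relations of the deformed cyclotomic quiver Hecke algebra `R_n(O)`. -/
inductive DefKLRRel (R : Type*) [CommRing R] (t : Rˣ) (n e ℓ : ℕ) [NeZero e] (κ : ℕ → ℤ) :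
    FreeAlgebra R (KLRGen n e) → FreeAlgebra R (KLRGen n e) → Prop
  | cyc (h : 0 < n) (i : Fin n → ZMod e) :
      DefKLRRel R t n e ℓ κ
        ((((List.range ℓ).map fun l =>
            if ((κ l : ZMod e) = i ⟨0, h⟩) then
              kY R (⟨0, h⟩ : Fin n) -
                algebraMap R _ (qintU t (κ l - ((i ⟨0, h⟩).val : ℤ)))
            else 1).prod) * kE R i) 0
  | orth (i j : Fin n → ZMod e) (h : i ≠ j) : DefKLRRel R t n e ℓ κ (kE R i * kE R j) 0
  | idem (i : Fin n → ZMod e) : DefKLRRel R t n e ℓ κ (kE R i * kE R i) (kE R i)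
  | complete : DefKLRRel R t n e ℓ κ (∑ i : Fin n → ZMod e, kE R i) 1
  | yE (k : Fin n) (i : Fin n → ZMod e) :
      DefKLRRel R t n e ℓ κ (kY R k * kE R i) (kE R i * kY R k)
  | psiE (r : Fin (n - 1)) (i : Fin n → ZMod e) :
      DefKLRRel R t n e ℓ κ (kPsi R r * kE R i) (kE R (swapSeq i r) * kPsi R r)
  | yy (k m : Fin n) : DefKLRRel R t n e ℓ κ (kY R k * kY R m) (kY R m * kY R k)
  | psiyEq (r : Fin (n - 1)) (i : Fin n → ZMod e) (h : i (pL r) = i (pR r)) :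
      DefKLRRel R t n e ℓ κ (kPsi R r * kY R (pR r) * kE R i)
        ((kY R (pL r) * kPsi R r + 1) * kE R i)
  | psiyNe (r : Fin (n - 1)) (i : Fin n → ZMod e) (h : i (pL r) ≠ i (pR r)) :
      DefKLRRel R t n e ℓ κ (kPsi R r * kY R (pR r) * kE R i)
        (kY R (pL r) * kPsi R r * kE R i)
  | ypsiEq (r : Fin (n - 1)) (i : Fin n → ZMod e) (h : i (pL r) = i (pR r)) :
      DefKLRRel R t n e ℓ κ (kY R (pR r) * kPsi R r * kE R i)
        ((kPsi R r * kY R (pL r) + 1) * kE R i)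
  | ypsiNe (r : Fin (n - 1)) (i : Fin n → ZMod e) (h : i (pL r) ≠ i (pR r)) :
      DefKLRRel R t n e ℓ κ (kY R (pR r) * kPsi R r * kE R i)
        (kPsi R r * kY R (pL r) * kE R i)
  | psiyFar (r : Fin (n - 1)) (k : Fin n) (h : k.1 ≠ r.1 ∧ k.1 ≠ r.1 + 1) :
      DefKLRRel R t n e ℓ κ (kPsi R r * kY R k) (kY R k * kPsi R r)
  | psipsiFar (r s : Fin (n - 1)) (h : r.1 + 1 < s.1 ∨ s.1 + 1 < r.1) :
      DefKLRRel R t n e ℓ κ (kPsi R r * kPsi R s) (kPsi R s * kPsi R r)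
  | quadEq (r : Fin (n - 1)) (i : Fin n → ZMod e) (h : i (pL r) = i (pR r)) :
      DefKLRRel R t n e ℓ κ (kPsi R r ^ 2 * kE R i) 0
  | quadR (r : Fin (n - 1)) (i : Fin n → ZMod e)
      (h1 : i (pR r) = i (pL r) + 1) (h2 : i (pL r) ≠ i (pR r) + 1) :
      DefKLRRel R t n e ℓ κ (kPsi R r ^ 2 * kE R i)
        ((ydot R t (1 + rhoI i r) (pL r) - kY R (pR r)) * kE R i)
  | quadL (r : Fin (n - 1)) (i : Fin n → ZMod e)
      (h1 : i (pL r) = i (pR r) + 1) (h2 : i (pR r) ≠ i (pL r) + 1) :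
      DefKLRRel R t n e ℓ κ (kPsi R r ^ 2 * kE R i)
        ((ydot R t (1 - rhoI i r) (pR r) - kY R (pL r)) * kE R i)
  | quadBoth (r : Fin (n - 1)) (i : Fin n → ZMod e)
      (h1 : i (pR r) = i (pL r) + 1) (h2 : i (pL r) = i (pR r) + 1) :
      DefKLRRel R t n e ℓ κ (kPsi R r ^ 2 * kE R i)
        ((ydot R t (1 + rhoI i r) (pL r) - kY R (pR r)) *
          (ydot R t (1 - rhoI i r) (pR r) - kY R (pL r)) * kE R i)
  | quadNone (r : Fin (n - 1)) (i : Fin n → ZMod e) (h1 : i (pL r) ≠ i (pR r))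
      (h2 : i (pR r) ≠ i (pL r) + 1) (h3 : i (pL r) ≠ i (pR r) + 1) :
      DefKLRRel R t n e ℓ κ (kPsi R r ^ 2 * kE R i) (kE R i)
  | braidBoth (r : Fin (n - 1)) (hr : r.1 + 1 < n - 1) (i : Fin n → ZMod e)
      (h0 : i (pM r hr) = i (pL r)) (h1 : i (pR r) = i (pL r) + 1)
      (h2 : i (pL r) = i (pR r) + 1) :
      DefKLRRel R t n e ℓ κ
        ((kPsi R r * kPsi R ⟨r.1 + 1, hr⟩ * kPsi R r -
            kPsi R ⟨r.1 + 1, hr⟩ * kPsi R r * kPsi R ⟨r.1 + 1, hr⟩) * kE R i)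
        ((ydot R t (1 + rhoI i r) (pL r) + ydot R t (1 + rhoI i r) (pM r hr) -
            ydot R t (1 + rhoI i r) (pR r) - ydot R t (1 - rhoI i r) (pR r)) * kE R i)
  | braidR (r : Fin (n - 1)) (hr : r.1 + 1 < n - 1) (i : Fin n → ZMod e)
      (h0 : i (pM r hr) = i (pL r)) (h1 : i (pR r) = i (pL r) + 1)
      (h2 : i (pL r) ≠ i (pR r) + 1) :
      DefKLRRel R t n e ℓ κ
        ((kPsi R r * kPsi R ⟨r.1 + 1, hr⟩ * kPsi R r -
            kPsi R ⟨r.1 + 1, hr⟩ * kPsi R r * kPsi R ⟨r.1 + 1, hr⟩) * kE R i)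
        (algebraMap R _ (-(((t ^ (1 + rhoI i r) : Rˣ) : R))) * kE R i)
  | braidL (r : Fin (n - 1)) (hr : r.1 + 1 < n - 1) (i : Fin n → ZMod e)
      (h0 : i (pM r hr) = i (pL r)) (h1 : i (pL r) = i (pR r) + 1)
      (h2 : i (pR r) ≠ i (pL r) + 1) :
      DefKLRRel R t n e ℓ κ
        ((kPsi R r * kPsi R ⟨r.1 + 1, hr⟩ * kPsi R r -
            kPsi R ⟨r.1 + 1, hr⟩ * kPsi R r * kPsi R ⟨r.1 + 1, hr⟩) * kE R i)
        (kE R i)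
  | braidNone (r : Fin (n - 1)) (hr : r.1 + 1 < n - 1) (i : Fin n → ZMod e)
      (h : ¬(i (pM r hr) = i (pL r) ∧
        (i (pR r) = i (pL r) + 1 ∨ i (pL r) = i (pR r) + 1))) :
      DefKLRRel R t n e ℓ κ
        ((kPsi R r * kPsi R ⟨r.1 + 1, hr⟩ * kPsi R r -
            kPsi R ⟨r.1 + 1, hr⟩ * kPsi R r * kPsi R ⟨r.1 + 1, hr⟩) * kE R i) 0

/-- The deformed cyclotomic quiver Hecke algebra `R_n(R)`. -/
noncomputable abbrev DefKLR (R : Type*) [CommRing R] (t : Rˣ) (n e ℓ : ℕ) [NeZero e]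
    (κ : ℕ → ℤ) : Type _ :=
  RingQuot (DefKLRRel R t n e ℓ κ)

/-- The generator `f_i` of the deformed cyclotomic quiver Hecke algebra. -/
noncomputable def DfGen (R : Type*) [CommRing R] (t : Rˣ) (n e ℓ : ℕ) [NeZero e]
    (κ : ℕ → ℤ) (i : Fin n → ZMod e) : DefKLR R t n e ℓ κ :=
  RingQuot.mkAlgHom R (DefKLRRel R t n e ℓ κ) (kE R i)

/-- The generator `ψ_r` of the deformed cyclotomic quiver Hecke algebra. -/
noncomputable def DpsiGen (R : Type*) [CommRing R] (t : Rˣ) (n e ℓ : ℕ) [NeZero e]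
    (κ : ℕ → ℤ) (r : Fin (n - 1)) : DefKLR R t n e ℓ κ :=
  RingQuot.mkAlgHom R (DefKLRRel R t n e ℓ κ) (kPsi R r)

/-- The generator `y_k` of the deformed cyclotomic quiver Hecke algebra. -/
noncomputable def DyGen (R : Type*) [CommRing R] (t : Rˣ) (n e ℓ : ℕ) [NeZero e]
    (κ : ℕ → ℤ) (k : Fin n) : DefKLR R t n e ℓ κ :=
  RingQuot.mkAlgHom R (DefKLRRel R t n e ℓ κ) (kY R k)

/-! ## Seminormal idempotents -/

/-- The seminormal idempotent `F_T` of the semisimple cyclotomic Hecke algebra: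
`F_T = ∏_{k=1}^n ∏_{c ∈ Cont(n), [c_k(T)] ≠ [c]} (L_k - [c]) / ([c_k(T)] - [c])`. -/
noncomputable def Fidem (K : Type*) [Field K] (tK : Kˣ) (n ℓ : ℕ) (κ : ℕ → ℤ)
    (T : StdTableau ℓ n) : CycHecke K tK n ℓ κ :=
  ((List.finRange n).map (fun k =>
    (((contFinset ℓ n κ).sort (· ≤ ·)).map (fun c =>
      if qint (tK : K) (content κ T (k.1 + 1)) ≠ qint (tK : K) c then
        (Lgen K tK n ℓ κ k - algebraMap K _ (qint (tK : K) c)) *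
          algebraMap K _ ((qint (tK : K) (content κ T (k.1 + 1)) - qint (tK : K) c)⁻¹)
      else 1)).prod)).prod

/-- The residue idempotent `f_i = Σ_{T ∈ Std(i)} F_T`. -/
noncomputable def fres (K : Type*) [Field K] (tK : Kˣ) (n ℓ e : ℕ) (κ : ℕ → ℤ)
    (i : Fin n → ZMod e) : CycHecke K tK n ℓ κ :=
  ∑ᶠ T : {T : StdTableau ℓ n // resSeq e κ T = i}, Fidem K tK n ℓ κ T.1

/-- The simultaneous two-sided eigenspace `H_{S,T}` of the Jucys–Murphy elements. -/
noncomputable def eigSub (K : Type*) [Field K] (tK : Kˣ) (n ℓ : ℕ) (κ : ℕ → ℤ)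
    (S T : StdTableau ℓ n) : Submodule K (CycHecke K tK n ℓ κ) where
  carrier := {h | ∀ k : Fin n,
      Lgen K tK n ℓ κ k * h = qint (tK : K) (content κ S (k.1 + 1)) • h ∧
      h * Lgen K tK n ℓ κ k = qint (tK : K) (content κ T (k.1 + 1)) • h}
  add_mem' := by
    intro a b ha hb
    intro k
    obtain ⟨h1, h2⟩ := ha k
    obtain ⟨h3, h4⟩ := hb k
    exact ⟨by rw [mul_add, h1, h3, smul_add], by rw [add_mul, h2, h4, smul_add]⟩
  zero_mem' := by intro k; simp
  smul_mem' := by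
    intro c a ha
    intro k
    obtain ⟨h1, h2⟩ := ha k
    constructor
    · rw [mul_smul_comm, h1, smul_comm]
    · rw [smul_mul_assoc, h2, smul_comm]

end Paper

/-!
Let `L_1, …, L_n` act on `H_n(K, t, κ)` by left multiplication. On a joint eigenvector of `L_1, …,
L_k` whose eigenvalues are the quantum contents of a standard tableau of size `k`, every eigenvalue
of `L_{k+1}` is the content of an addable node: the square of the intertwiner `T_k (L_k - L_{k+1}) +
(t - 1) L_{k+1} + 1` factors in `L_k` and `L_{k+1}`, so an eigenvalue of `L_{k+1}` is either
possible already for `L_k` or belongs to a neighbouring diagonal of the node containing `k`, and in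
the second case the braid relation forces the node to be addable. Hence `H_n(K, t, κ)` is spanned by
joint eigenvectors indexed by standard tableaux, and an element is determined by the scalars by
which it acts on them. There `F_T` acts as the indicator of `T`, and `f_i^φ` as `φ(T)⁻¹` on `Std(i)`
and as zero elsewhere. These are also the scalars of `ψ(L_1, …, L_n)` for a polynomial `ψ` over `O`:
since `[k]_t` is a unit for `e ∤ k`, a product of factors `L_k - [c]_t` vanishes off
`Std(i)` and is a unit on `Std(i)`, and finitely many units are inverted simultaneously by one
polynomial.
-/

namespace Paper

section QuantumInteger

variable {R : Type*} [CommRing R] (t : Rˣ)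

lemma qintU_zero : qintU t 0 = 0 := by simp [qintU]

lemma qintU_one : qintU t 1 = 1 := by simp [qintU]

lemma qintU_add_one (d : ℤ) : qintU t (d + 1) = t * qintU t d + 1 := by
  obtain ⟨m, rfl | rfl⟩ : ∃ m : ℕ, d = m ∨ d = -(m + 1 : ℕ) := by
    rcases le_or_gt 0 d with h | h
    · exact ⟨d.toNat, by omega⟩
    · exact ⟨(-d - 1).toNat, by omega⟩
  · have toNat_succ : ((m : ℤ) + 1).toNat = m + 1 := by omega
    rw [qintU, qintU, if_pos (by omega), if_pos (by omega), toNat_succ, Finset.sum_range_succ']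
    simp [Finset.mul_sum, pow_succ']
  · rcases m with _ | m
    · simp [qintU]
    · have shift (k : ℕ) : (t : R) * ((t ^ (-(((k + 1 : ℕ) : ℤ) + 1)) : Rˣ) : R) =
          ((t ^ (-((k : ℤ) + 1)) : Rˣ) : R) := by
        rw [← Units.val_mul, ← zpow_one_add]
        simp
      have toNat_left : (-(-((m + 1 + 1 : ℕ) : ℤ) + 1)).toNat = m + 1 := by omega
      have toNat_right : (-(-((m + 1 + 1 : ℕ) : ℤ))).toNat = m + 1 + 1 := by omega
      rw [qintU, qintU, if_neg (by omega), if_neg (by omega), toNat_left, toNat_right,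
        Finset.sum_range_succ' _ (m + 1), mul_neg, mul_add, Finset.mul_sum,
        Finset.sum_congr rfl fun k _ => shift k]
      simp

lemma sub_one_mul_qintU_add_one (d : ℤ) : ((t : R) - 1) * qintU t d + 1 = (t ^ d : Rˣ) := by
  induction d using Int.induction_on with
  | zero => simp [qintU_zero]
  | succ k ih => rw [qintU_add_one, zpow_add_one, Units.val_mul, ← ih]; ring
  | pred k ih =>
    have step := qintU_add_one t (-(k : ℤ) - 1)
    rw [sub_add_cancel] at step
    rw [zpow_sub_one, Units.val_mul, Units.eq_mul_inv_iff_mul_eq, ← ih, step]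
    ring

lemma qintU_add (a b : ℤ) : qintU t (a + b) = qintU t a + (t ^ a : Rˣ) * qintU t b := by
  rw [← sub_one_mul_qintU_add_one]
  induction b using Int.induction_on with
  | zero => simp [qintU_zero]
  | succ k ih => rw [← add_assoc, qintU_add_one, ih, qintU_add_one]; ring
  | pred k ih =>
    have step := qintU_add_one t (a + (-(k : ℤ) - 1))
    have step' := qintU_add_one t (-(k : ℤ) - 1)
    rw [sub_add_cancel] at step'
    rw [show a + (-(k : ℤ) - 1) + 1 = a + -(k : ℤ) by ring, ih, step'] at step
    apply t.isUnit.mul_left_cancel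
    linear_combination -step

lemma qintU_sub_qintU (a b : ℤ) : qintU t a - qintU t b = (t ^ b : Rˣ) * qintU t (a - b) := by
  have h := qintU_add t b (a - b)
  rw [add_sub_cancel] at h
  rw [h, add_sub_cancel_left]

lemma isUnit_qintU_sub_qintU {a b : ℤ} :
    IsUnit (qintU t a - qintU t b) ↔ IsUnit (qintU t (a - b)) := by
  rw [qintU_sub_qintU, Units.isUnit_units_mul]

lemma isUnit_qintU_neg {a : ℤ} : IsUnit (qintU t (-a)) ↔ IsUnit (qintU t a) := by
  rw [← zero_sub, ← isUnit_qintU_sub_qintU, qintU_zero, zero_sub, IsUnit.neg_iff]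

lemma map_qintU {S : Type*} [CommRing S] (f : R →+* S) (d : ℤ) :
    f (qintU t d) = qintU (Units.map (f : R →* S) t) d := by
  simp only [qintU]
  split_ifs
  · simp
  · simp [map_neg, map_sum, ← map_zpow]

lemma qint_eq_qintU {K : Type*} [Field K] (t : Kˣ) (d : ℤ) : qint (t : K) d = qintU t d := by
  simp [qint, qintU]

variable {t} {n ℓ : ℕ} {κ : ℕ → ℤ}

lemma SeparatesU.map {S : Type*} [CommRing S] (f : R →+* S) (h : SeparatesU t n ℓ κ) :
    SeparatesU (Units.map (f : R →* S) t) n ℓ κ := by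
  simpa only [SeparatesU, map_mul, map_prod, map_qintU] using IsUnit.map f h

lemma SeparatesU.isUnit_qintU (h : SeparatesU t n ℓ κ) {d : ℤ} (hd : d ≠ 0) (hdn : |d| ≤ n) :
    IsUnit (qintU t d) := by
  wlog hpos : 0 < d generalizing d
  · exact (isUnit_qintU_neg t).1 (this (neg_ne_zero.2 hd) (by rwa [abs_neg]) (by omega))
  lift d to ℕ using hpos.le
  refine isUnit_of_dvd_unit (Finset.dvd_prod_of_mem (fun d : ℕ => qintU t (d : ℤ)) ?_)
    (isUnit_of_mul_isUnit_left h)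
  rw [abs_of_pos hpos] at hdn
  exact Finset.mem_Icc.2 ⟨by omega, by omega⟩

lemma SeparatesU.isUnit_qintU_charge (h : SeparatesU t n ℓ κ) {l m : ℕ} (hlm : l ≠ m)
    (hl : l < ℓ) (hm : m < ℓ) {d : ℤ} (hd : |d| < n) : IsUnit (qintU t (κ l - κ m + d)) := by
  wlog hlt : l < m generalizing l m d
  · rw [← isUnit_qintU_neg, show -(κ l - κ m + d) = κ m - κ l + -d by ring]
    exact this hlm.symm hm hl (by rwa [abs_neg]) (by omega)
  have factor := isUnit_of_mul_isUnit_right h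
  simp only [IsUnit.prod_iff, Finset.mem_range, Finset.mem_Ioo] at factor
  exact factor l hl m ⟨hlt, hm⟩ d (abs_lt.1 hd)

end QuantumInteger

section Diagram

/-- The content `κ_l + c - r` of the node `(l, r, c)`. -/
def nodeContent (κ : ℕ → ℤ) (A : Node) : ℤ := κ A.1 + A.2.2 - A.2.1

/-- `A` lies weakly north-west of `B` in the same component. -/
def NorthWest (A B : Node) : Prop := A.1 = B.1 ∧ A.2 ≤ B.2

/-- The reflection of a node in the main diagonal of its component. -/
def Node.transpose (A : Node) : Node := (A.1, A.2.2, A.2.1)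

variable {ℓ : ℕ} {S S' : Set Node} {A B : Node}

lemma IsDiagramSet.empty : IsDiagramSet ℓ ∅ := by simp [IsDiagramSet]

lemma IsDiagramSet.union (hS : IsDiagramSet ℓ S) (hS' : IsDiagramSet ℓ S') :
    IsDiagramSet ℓ (S ∪ S') :=
  ⟨hS.1.union hS'.1, fun A hA => hA.elim (hS.2.1 A) (hS'.2.1 A),
    fun l r c h => h.imp (hS.2.2.1 l r c) (hS'.2.2.1 l r c),
    fun l r c h => h.imp (hS.2.2.2 l r c) (hS'.2.2.2 l r c)⟩

lemma IsDiagramSet.mem_of_northWest (hS : IsDiagramSet ℓ S) (hB : B ∈ S)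
    (hAB : NorthWest A B) : A ∈ S := by
  obtain ⟨l, r, c⟩ := A
  obtain ⟨m, r', c'⟩ := B
  obtain ⟨rfl, hr : r ≤ r', hc : c ≤ c'⟩ := hAB
  have left_mem : (l, r', c) ∈ S := by
    induction c', hc using Nat.le_induction with
    | base => exact hB
    | succ c' _ ih => exact ih (hS.2.2.1 l r' c' hB)
  induction r', hr using Nat.le_induction with
  | base => exact left_mem
  | succ r' _ ih => exact ih (hS.2.2.2 l r' c' hB) (hS.2.2.2 l r' c left_mem)

lemma IsDiagramSet.transpose (hS : IsDiagramSet ℓ S) :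
    IsDiagramSet ℓ (Node.transpose ⁻¹' S) := by
  have transpose_injective : Function.Injective Node.transpose := by
    rintro ⟨l, r, c⟩ ⟨m, r', c'⟩ h
    simp_all [Node.transpose]
  exact ⟨hS.1.preimage transpose_injective.injOn, fun A hA => hS.2.1 A.transpose hA,
    fun l r c => hS.2.2.2 l c r, fun l r c => hS.2.2.1 l c r⟩

lemma transpose_preimage_union_singleton :
    Node.transpose ⁻¹' (S ∪ {A}) = Node.transpose ⁻¹' S ∪ {A.transpose} := by
  ext ⟨l, r, c⟩
  simp only [Set.mem_preimage, Set.mem_union, Set.mem_singleton_iff]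
  refine or_congr_right ⟨fun h => ?_, fun h => ?_⟩
  · rw [← h]
    rfl
  · rw [h]
    rfl

lemma Addable.transpose (hA : Addable ℓ S A) :
    Addable ℓ (Node.transpose ⁻¹' S) A.transpose :=
  ⟨hA.1, transpose_preimage_union_singleton ▸ hA.2.transpose⟩

lemma Addable.mem_of_northWest (hA : Addable ℓ S A) (hBA : NorthWest B A) (hne : B ≠ A) :
    B ∈ S :=
  (hA.2.mem_of_northWest (Or.inr rfl) hBA).resolve_right hne

lemma Addable.lt_components (hA : Addable ℓ S A) : A.1 < ℓ := hA.2.2.1 A (Or.inr rfl)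

lemma Addable.finite (hA : Addable ℓ S A) : S.Finite := hA.2.1.subset Set.subset_union_left

lemma IsDiagramSet.addable {l r c : ℕ} (hS : IsDiagramSet ℓ S) (hl : l < ℓ)
    (hA : (l, r, c) ∉ S) (above : ∀ r', r = r' + 1 → (l, r', c) ∈ S)
    (left : ∀ c', c = c' + 1 → (l, r, c') ∈ S) : Addable ℓ S (l, r, c) := by
  refine ⟨hA, hS.1.union (Set.finite_singleton _), ?_, ?_, ?_⟩
  · rintro B (hB | rfl)
    exacts [hS.2.1 B hB, hl]
  · rintro l' r' c' (hB | hB)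
    · exact Or.inl (hS.2.2.1 l' r' c' hB)
    · obtain ⟨rfl, rfl, rfl⟩ : l' = l ∧ r' = r ∧ c' + 1 = c := by simpa using hB
      exact Or.inl (left c' rfl)
  · rintro l' r' c' (hB | hB)
    · exact Or.inl (hS.2.2.2 l' r' c' hB)
    · obtain ⟨rfl, rfl, rfl⟩ : l' = l ∧ r' + 1 = r ∧ c' = c := by simpa using hB
      exact Or.inl (above r' rfl)

lemma Addable.union_singleton (hA : Addable ℓ S A) (hB : Addable ℓ S B) (hne : A ≠ B) :
    Addable ℓ (S ∪ {B}) A := by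
  refine ⟨fun h => h.elim hA.1 hne, ?_⟩
  rw [show S ∪ {B} ∪ {A} = (S ∪ {A}) ∪ (S ∪ {B}) by grind]
  exact hA.2.union hB.2

lemma Addable.of_union_singleton (hS : IsDiagramSet ℓ S) (hA : Addable ℓ (S ∪ {B}) A)
    (hBA : ¬ NorthWest B A) : Addable ℓ S A := by
  have mem_of_northWest {X : Node} (hX : NorthWest X A) (hne : X ≠ A) : X ∈ S :=
    (hA.mem_of_northWest hX hne).resolve_right fun h => hBA (h ▸ hX)
  refine hS.addable hA.lt_components (fun h => hA.1 (Or.inl h)) (fun r' hr => ?_) fun c' hc => ?_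
  · refine mem_of_northWest ⟨rfl, ?_, le_rfl⟩ fun h => ?_
    · exact hr ▸ Nat.le_succ r'
    · exact Nat.succ_ne_self r' (hr ▸ congrArg (fun X : Node => X.2.1) h).symm
  · refine mem_of_northWest ⟨rfl, le_rfl, ?_⟩ fun h => ?_
    · exact hc ▸ Nat.le_succ c'
    · exact Nat.succ_ne_self c' (hc ▸ congrArg (fun X : Node => X.2.2) h).symm

lemma Removable.not_northWest (hA : Removable ℓ S A) (hB : B ∈ S) (hne : B ≠ A) :
    ¬ NorthWest A B :=
  fun h => (hA.2.mem_of_northWest ⟨hB, hne⟩ h).2 rfl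

lemma IsDiagramSet.removable {l r c : ℕ} (hS : IsDiagramSet ℓ S) (hA : (l, r, c) ∈ S)
    (below : (l, r + 1, c) ∉ S) (right : (l, r, c + 1) ∉ S) : Removable ℓ S (l, r, c) := by
  refine ⟨hA, hS.1.sdiff, fun B hB => hS.2.1 B hB.1, ?_, ?_⟩
  · rintro l' r' c' ⟨hB, -⟩
    refine ⟨hS.2.2.1 l' r' c' hB, fun h => right ?_⟩
    obtain ⟨rfl, rfl, rfl⟩ : l' = l ∧ r' = r ∧ c' = c := by simpa using h
    exact hB
  · rintro l' r' c' ⟨hB, -⟩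
    refine ⟨hS.2.2.2 l' r' c' hB, fun h => below ?_⟩
    obtain ⟨rfl, rfl, rfl⟩ : l' = l ∧ r' = r ∧ c' = c := by simpa using h
    exact hB

lemma Addable.exists_removable_above {l r c : ℕ} (hS : IsDiagramSet ℓ S)
    (hA : Addable ℓ S (l, r, c)) (right : ¬ Addable ℓ (S ∪ {(l, r, c)}) (l, r, c + 1)) :
    ∃ r', r = r' + 1 ∧ Removable ℓ S (l, r', c) := by
  have right_notMem : (l, r, c + 1) ∉ S := fun h => hA.1 (hS.2.2.1 l r c h)
  obtain ⟨r', rfl, above_right⟩ : ∃ r', r = r' + 1 ∧ (l, r', c + 1) ∉ S := by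
    by_contra! h
    refine right (hA.2.addable hA.lt_components ?_ (fun r' hr => Or.inl (h r' hr)) ?_)
    · simpa using right_notMem
    · rintro c' hc
      obtain rfl : c = c' := by omega
      exact Or.inr rfl
  refine ⟨r', rfl, hS.removable ?_ hA.1 above_right⟩
  exact hA.mem_of_northWest ⟨rfl, Nat.le_succ r', le_rfl⟩ (by simp)

lemma Addable.exists_removable_left {l r c : ℕ} (hS : IsDiagramSet ℓ S)
    (hA : Addable ℓ S (l, r, c)) (below : ¬ Addable ℓ (S ∪ {(l, r, c)}) (l, r + 1, c)) :
    ∃ c', c = c' + 1 ∧ Removable ℓ S (l, r, c') := by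
  obtain ⟨c', hc, mem, diagram⟩ := hA.transpose.exists_removable_above hS.transpose fun h =>
    below (transpose_preimage_union_singleton (A := (l, c, r)) ▸ h.transpose :)
  refine ⟨c', hc, mem, ?_⟩
  convert diagram.transpose using 1
  ext ⟨l, r, c⟩
  simp [Node.transpose, and_comm]

end Diagram

section ContentSeparation

variable {ℓ : ℕ} {S : Set Node} {A B : Node}

lemma add_card_le_ncard_component {l r c c' : ℕ} {I : Finset ℕ} (hS : S.Finite)
    (row : ∀ x < c, (l, r, x) ∈ S) (column : ∀ y ∈ I, (l, y, c') ∈ S) (hr : r ∉ I) :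
    c + I.card ≤ (S ∩ {X | X.1 = l}).ncard := by
  have row_card : ((Finset.range c).image fun x => ((l, r, x) : Node)).card = c := by
    rw [Finset.card_image_of_injective _ fun a b h => by simpa using h, Finset.card_range]
  have column_card : (I.image fun y => ((l, y, c') : Node)).card = I.card :=
    Finset.card_image_of_injective _ fun a b h => by simpa using h
  rw [← column_card]
  nth_rewrite 1 [← row_card]
  rw [← Finset.card_union_of_disjoint, ← Set.ncard_coe_finset]
  · refine Set.ncard_le_ncard ?_ (hS.inter_of_left _)
    simp only [Finset.coe_union, Finset.coe_image, Finset.coe_range, Set.union_subset_iff,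
      Set.image_subset_iff]
    exact ⟨fun x hx => ⟨row x hx, rfl⟩, fun y hy => ⟨column y hy, rfl⟩⟩
  · grind [Finset.disjoint_left]

lemma IsDiagramSet.lt_ncard {l r c : ℕ} (hS : IsDiagramSet ℓ S) (hA : (l, r, c) ∈ S) :
    r < S.ncard ∧ c < S.ncard := by
  have component_le := Set.ncard_inter_le_ncard_left S {X | X.1 = l} hS.1
  have row := add_card_le_ncard_component (c := c + 1) (c' := c) (I := ∅) hS.1
    (fun x hx => hS.mem_of_northWest hA ⟨rfl, le_rfl, Nat.le_of_lt_succ hx⟩) (by simp)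
    (Finset.notMem_empty r)
  have column := add_card_le_ncard_component (c := 0) (I := Finset.range (r + 1)) hS.1 (by simp)
    (fun y hy => hS.mem_of_northWest hA
      ⟨rfl, Nat.le_of_lt_succ (Finset.mem_range.1 hy), le_rfl⟩)
    Finset.notMem_range_self
  rw [Finset.card_empty] at row
  rw [Finset.card_range] at column
  omega

lemma Addable.add_le_ncard_component {l r c : ℕ} (hA : Addable ℓ S (l, r, c)) :
    c + r ≤ (S ∩ {X | X.1 = l}).ncard := by
  conv_lhs => rw [← Finset.card_range r]
  refine add_card_le_ncard_component (c' := c) hA.finite (fun x hx => ?_) (fun y hy => ?_)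
    Finset.notMem_range_self
  · exact hA.mem_of_northWest ⟨rfl, le_rfl, hx.le⟩ (by simp [hx.ne])
  · rw [Finset.mem_range] at hy
    exact hA.mem_of_northWest ⟨rfl, hy.le, le_rfl⟩ (by simp [hy.ne])

lemma Addable.add_le_ncard_add_one {l r c r' c' : ℕ} (hA : Addable ℓ S (l, r, c))
    (hB : Addable ℓ S (l, r', c')) (hr : r < r') : c + r' ≤ S.ncard + 1 := by
  have hook := add_card_le_ncard_component (c := c) (c' := c') (I := (Finset.range r').erase r)
    hA.finite (fun x hx => hA.mem_of_northWest ⟨rfl, le_rfl, hx.le⟩ (by simp [hx.ne]))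
    (fun y hy => ?_) (Finset.notMem_erase r _)
  · have component_le := Set.ncard_inter_le_ncard_left S {X | X.1 = l} hA.finite
    rw [Finset.card_erase_of_mem (Finset.mem_range.2 hr), Finset.card_range] at hook
    omega
  · have hy : y < r' := Finset.mem_range.1 (Finset.mem_of_mem_erase hy)
    exact hB.mem_of_northWest ⟨rfl, hy.le, le_rfl⟩ (by simp [hy.ne])

lemma Addable.column_lt_of_row_lt {l r c r' c' : ℕ} (hA : Addable ℓ S (l, r, c))
    (hB : Addable ℓ S (l, r', c')) (hr : r < r') : c' < c := by
  by_contra! hc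
  exact hA.1 (hB.mem_of_northWest ⟨rfl, hr.le, hc⟩ (by simp [hr.ne]))

lemma Addable.row_ne {l r c r' c' : ℕ} (hA : Addable ℓ S (l, r, c))
    (hB : Addable ℓ S (l, r', c')) (hne : (r, c) ≠ (r', c')) : r ≠ r' := by
  rintro rfl
  rcases lt_trichotomy c c' with h | rfl | h
  · exact hA.1 (hB.mem_of_northWest ⟨rfl, le_rfl, h.le⟩ (by simp [h.ne]))
  · exact hne rfl
  · exact hB.1 (hA.mem_of_northWest ⟨rfl, le_rfl, h.le⟩ (by simp [h.ne]))

lemma Addable.abs_nodeContent_sub_mem_Icc (κ : ℕ → ℤ) (hA : Addable ℓ S A) (hB : Addable ℓ S B)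
    (hne : A ≠ B) (hcomp : A.1 = B.1) :
    |nodeContent κ A - nodeContent κ B| ∈ Set.Icc 2 ((S.ncard : ℤ) + 1) := by
  wlog hr : A.2.1 < B.2.1 generalizing A B
  · rw [abs_sub_comm]
    obtain ⟨l, r, c⟩ := A
    obtain ⟨m, r', c'⟩ := B
    obtain rfl : l = m := hcomp
    exact this hB hA hne.symm rfl
      ((not_lt.1 hr).lt_of_ne (hB.row_ne hA (by simpa using hne.symm)))
  obtain ⟨l, r, c⟩ := A
  obtain ⟨m, r', c'⟩ := B
  obtain rfl : l = m := hcomp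
  replace hr : r < r' := hr
  have column_lt := hA.column_lt_of_row_lt hB hr
  have hook := hA.add_le_ncard_add_one hB hr
  simp only [nodeContent]
  rw [abs_of_nonneg (by omega), Set.mem_Icc]
  omega

lemma Addable.abs_nodeContent_zero_sub_le (hA : Addable ℓ S A) (hB : Addable ℓ S B)
    (hcomp : A.1 ≠ B.1) : |nodeContent 0 A - nodeContent 0 B| ≤ S.ncard := by
  have disjoint_components : Disjoint (S ∩ {X | X.1 = A.1}) (S ∩ {X | X.1 = B.1}) :=
    Set.disjoint_left.2 fun X h h' => hcomp (h.2.symm.trans h'.2)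
  have card_le : (S ∩ {X | X.1 = A.1}).ncard + (S ∩ {X | X.1 = B.1}).ncard ≤ S.ncard := by
    rw [← Set.ncard_union_eq disjoint_components (hA.finite.inter_of_left _)
      (hA.finite.inter_of_left _)]
    exact Set.ncard_le_ncard (Set.union_subset Set.inter_subset_left Set.inter_subset_left)
      hA.finite
  obtain ⟨l, r, c⟩ := A
  obtain ⟨m, r', c'⟩ := B
  have hookA := hA.add_le_ncard_component
  have hookB := hB.add_le_ncard_component
  simp only [nodeContent, Pi.zero_apply] at card_le ⊢
  rw [abs_le]
  omega

lemma Addable.isUnit_qintU_sub_qintU {R : Type*} [CommRing R] {t : Rˣ} {n : ℕ} {κ : ℕ → ℤ}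
    {ε : ℤ} (hs : SeparatesU t n ℓ κ) (hA : Addable ℓ S A) (hB : Addable ℓ S B)
    (hε : |ε| ≤ 1) (hne : A = B → ε ≠ 0) (hS : S.ncard + 1 + |ε| ≤ n) :
    IsUnit (qintU t (nodeContent κ A) - qintU t (nodeContent κ B + ε)) := by
  rw [Paper.isUnit_qintU_sub_qintU, ← sub_sub]
  rcases eq_or_ne A B with rfl | hAB
  · rw [sub_self, zero_sub, isUnit_qintU_neg]
    exact hs.isUnit_qintU (hne rfl) (by omega)
  have abs_sub_le := abs_sub (nodeContent κ A - nodeContent κ B) ε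
  by_cases hcomp : A.1 = B.1
  · obtain ⟨two_le, le⟩ := hA.abs_nodeContent_sub_mem_Icc κ hB hAB hcomp
    refine hs.isUnit_qintU (fun h => ?_) (by omega)
    rw [sub_eq_zero.1 h] at two_le
    omega
  · have le := hA.abs_nodeContent_zero_sub_le hB hcomp
    have abs_sub_le := abs_sub (nodeContent 0 A - nodeContent 0 B) ε
    rw [show nodeContent κ A - nodeContent κ B - ε =
      κ A.1 - κ B.1 + (nodeContent 0 A - nodeContent 0 B - ε) by
        simp only [nodeContent, Pi.zero_apply]; ring]
    exact hs.isUnit_qintU_charge hcomp hA.lt_components hB.lt_components (by omega)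

end ContentSeparation

section Path

/-- The nodes `N 0, …, N (k - 1)` can be added one after another to the empty diagram. This is how
standard tableaux enter the argument: `N j` is the node containing the entry `j + 1`. -/
def IsPath (ℓ k : ℕ) (N : ℕ → Node) : Prop := ∀ j < k, Addable ℓ (N '' Set.Iio j) (N j)

lemma image_Iio_succ {α : Type*} (N : ℕ → α) (k : ℕ) :
    N '' Set.Iio (k + 1) = N '' Set.Iio k ∪ {N k} := by
  rw [Set.union_singleton, ← Set.image_insert_eq]
  congr 1
  ext i
  simp only [Set.mem_Iio, Set.mem_insert_iff]
  omega

variable {ℓ k j : ℕ} {N : ℕ → Node}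

lemma IsPath.mono (h : IsPath ℓ k N) (hj : j ≤ k) : IsPath ℓ j N :=
  fun i hi => h i (hi.trans_le hj)

lemma IsPath.isDiagramSet (h : IsPath ℓ k N) : IsDiagramSet ℓ (N '' Set.Iio k) := by
  rcases k with _ | k
  · simpa using IsDiagramSet.empty
  · rw [image_Iio_succ]
    exact (h k k.lt_succ_self).2

lemma IsPath.injOn (h : IsPath ℓ k N) : Set.InjOn N (Set.Iio k) := by
  intro i hi j hj hij
  by_contra hne
  rcases lt_or_gt_of_ne hne with hlt | hlt
  · exact (h j hj).1 ⟨i, hlt, hij⟩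
  · exact (h i hi).1 ⟨j, hlt, hij.symm⟩

lemma IsPath.ncard (h : IsPath ℓ k N) : (N '' Set.Iio k).ncard = k := by
  rw [h.injOn.ncard_image, Set.ncard_Iio_nat]

lemma isPath_iff : IsPath ℓ k N ↔
    Set.InjOn N (Set.Iio k) ∧ ∀ j ≤ k, IsDiagramSet ℓ (N '' Set.Iio j) := by
  refine ⟨fun h => ⟨h.injOn, fun j hj => (h.mono hj).isDiagramSet⟩, fun h j hj => ⟨?_, ?_⟩⟩
  · rintro ⟨i, hi : i < j, hij⟩
    exact hi.ne (h.1 (hi.trans hj) hj hij)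
  · rw [← image_Iio_succ]
    exact h.2 _ hj

lemma image_comp_swap_Iio {α : Type*} (N : ℕ → α) {i : ℕ} (hi : i ≠ j + 1) :
    (N ∘ Equiv.swap j (j + 1)) '' Set.Iio i = N '' Set.Iio i := by
  rw [Set.image_comp, Equiv.image_eq_preimage_symm, Equiv.symm_swap]
  congr 1
  ext m
  simp only [Set.mem_preimage, Set.mem_Iio, Equiv.swap_apply_def]
  split_ifs <;> omega

lemma image_update_Iio {α : Type*} (N : ℕ → α) {i : ℕ} (hi : i ≤ j) (A : α) :
    Function.update N j A '' Set.Iio i = N '' Set.Iio i :=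
  Set.image_congr fun _ hm => Function.update_of_ne (hm.trans_le hi).ne A N

lemma IsPath.update (h : IsPath ℓ k N) (hj : k ≤ j) (A : Node) :
    IsPath ℓ k (Function.update N j A) := by
  intro i hi
  rw [image_update_Iio N (hi.le.trans hj), Function.update_of_ne (hi.trans_le hj).ne]
  exact h i hi

lemma IsPath.update_succ (h : IsPath ℓ k N) {A : Node} (hA : Addable ℓ (N '' Set.Iio k) A) :
    IsPath ℓ (k + 1) (Function.update N k A) := by
  intro i hi
  rcases Nat.lt_succ_iff_lt_or_eq.1 hi with hlt | rfl
  · exact h.update le_rfl A i hlt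
  · rwa [image_update_Iio N le_rfl, Function.update_self]

lemma IsPath.addable_of_not_northWest (h : IsPath ℓ k N) (hj : j + 1 < k)
    (hN : ¬ NorthWest (N j) (N (j + 1))) : Addable ℓ (N '' Set.Iio j) (N (j + 1)) := by
  have addable_succ := h (j + 1) hj
  rw [image_Iio_succ] at addable_succ
  exact addable_succ.of_union_singleton (h.mono (by omega)).isDiagramSet hN

lemma IsPath.swap (h : IsPath ℓ k N) (hj : j + 1 < k) (hN : ¬ NorthWest (N j) (N (j + 1))) :
    IsPath ℓ k (N ∘ Equiv.swap j (j + 1)) := by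
  refine isPath_iff.2 ⟨?_, fun i hi => ?_⟩
  · refine h.injOn.comp (Equiv.injective _).injOn fun i hi => ?_
    simp only [Set.mem_Iio, Equiv.swap_apply_def] at hi ⊢
    split_ifs <;> omega
  · rcases eq_or_ne i (j + 1) with rfl | hne
    · rw [image_Iio_succ, image_comp_swap_Iio N j.succ_ne_self.symm, Function.comp_apply,
        Equiv.swap_apply_left]
      exact (h.addable_of_not_northWest hj hN).2
    · rw [image_comp_swap_Iio N hne]
      exact (h.mono hi).isDiagramSet

lemma IsPath.qintU_nodeContent_add_ne {R : Type*} [CommRing R] [Nontrivial R] {t : Rˣ} {n : ℕ}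
    {κ : ℕ → ℤ} (hs : SeparatesU t n ℓ κ) (h : IsPath ℓ (k + 1) N) (hk : k + 1 < n) {B : Node}
    (hB : Addable ℓ (N '' Set.Iio k) B) {ε : ℤ} (hε : |ε| = 1) :
    (qintU t (nodeContent κ (N k) + ε) : R) ≠ qintU t (nodeContent κ B) := by
  refine fun heq => (hB.isUnit_qintU_sub_qintU hs (h k k.lt_succ_self) hε.le (by grind)
    ?_).ne_zero (sub_eq_zero.2 heq.symm)
  rw [hε, (h.mono k.le_succ).ncard]
  omega

end Path

section Tableau

variable {ℓ n : ℕ} {S : Set Node}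

/-- The length of row `r` in component `l` of a diagram. -/
noncomputable def rowLength (S : Set Node) (l r : ℕ) : ℕ := {c | (l, r, c) ∈ S}.ncard

lemma IsDiagramSet.lt_rowLength_iff (hS : IsDiagramSet ℓ S) {l r c : ℕ} :
    c < rowLength S l r ↔ (l, r, c) ∈ S := by
  have lower : IsLowerSet {c | (l, r, c) ∈ S} :=
    fun a b hab ha => hS.mem_of_northWest ha ⟨rfl, le_rfl, hab⟩
  have finite : {c | (l, r, c) ∈ S}.Finite :=
    hS.1.preimage fun a _ b _ h => congrArg (fun X : Node => X.2.2) h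
  obtain ⟨m, hm⟩ := lower.eq_univ_or_Iio.resolve_left fun h =>
    Set.infinite_univ (h ▸ finite)
  rw [rowLength, hm, Set.ncard_Iio_nat, ← Set.mem_Iio, ← hm, Set.mem_ofPred_eq]

lemma IsDiagramSet.rowLength_eq_zero (hS : IsDiagramSet ℓ S) {l r : ℕ} (h : (l, r, 0) ∉ S) :
    rowLength S l r = 0 := by
  rwa [← hS.lt_rowLength_iff, not_lt, Nat.le_zero] at h

lemma IsDiagramSet.sum_rowLength (hS : IsDiagramSet ℓ S) :
    ∑ l ∈ Finset.range ℓ, ∑ r ∈ Finset.range S.ncard, rowLength S l r = S.ncard := by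
  have maps_rows : ∀ A ∈ hS.1.toFinset, (A.1, A.2.1) ∈ Finset.range ℓ ×ˢ Finset.range S.ncard := by
    intro A hA
    rw [Set.Finite.mem_toFinset] at hA
    exact Finset.mk_mem_product (Finset.mem_range.2 (hS.2.1 A hA))
      (Finset.mem_range.2 (hS.lt_ncard hA).1)
  rw [← Finset.sum_product']
  refine Eq.trans ?_ ((Finset.card_eq_sum_card_fiberwise maps_rows).symm.trans
    (Set.ncard_eq_toFinset_card S hS.1).symm)
  refine Finset.sum_congr rfl fun x _ => ?_
  have row_injective : Function.Injective fun c => ((x.1, x.2, c) : Node) := by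
    intro a b h
    simpa using h
  rw [rowLength, ← Set.ncard_image_of_injective _ row_injective, ← Set.ncard_coe_finset]
  congr 1
  ext ⟨l, r, c⟩
  simp only [Set.mem_image, Set.mem_ofPred_eq, Finset.coe_filter, Set.Finite.mem_toFinset]
  grind

/-- The multipartition with a given diagram. -/
noncomputable def Multipartition.ofDiagram (hS : IsDiagramSet ℓ S) (hn : S.ncard = n) :
    Multipartition ℓ n where
  part := rowLength S
  comp_bound l hl r := hS.rowLength_eq_zero fun h => (hS.2.1 _ h).not_ge hl
  antitone l r r' hr := by
    by_contra! h
    exact lt_irrefl _ (hS.lt_rowLength_iff.2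
      (hS.mem_of_northWest (hS.lt_rowLength_iff.1 h) ⟨rfl, hr, le_rfl⟩))
  row_bound l r hr := hS.rowLength_eq_zero fun h => (hn ▸ (hS.lt_ncard h).1).not_ge hr
  size := hn ▸ hS.sum_rowLength

lemma Multipartition.diagram_ofDiagram (hS : IsDiagramSet ℓ S) (hn : S.ncard = n) :
    (Multipartition.ofDiagram hS hn).diagram = S :=
  Set.ext fun _ => hS.lt_rowLength_iff

variable {N : ℕ → Node}

/-- The entry of a node in the tableau given by a path: its index, counted from `1`, if the path
visits the node, and `0` otherwise. -/
noncomputable def pathEntry (n : ℕ) (N : ℕ → Node) (A : Node) : ℕ :=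
  if A ∈ N '' Set.Iio n then Function.invFunOn N (Set.Iio n) A + 1 else 0

lemma IsPath.pathEntry_apply (h : IsPath ℓ n N) {k : ℕ} (hk : k < n) :
    pathEntry n N (N k) = k + 1 := by
  rw [pathEntry, if_pos ⟨k, hk, rfl⟩, h.injOn.leftInvOn_invFunOn hk]

lemma IsPath.pathEntry_lt (h : IsPath ℓ n N) {A B : Node} (hB : B ∈ N '' Set.Iio n)
    (hAB : NorthWest A B) (hne : A ≠ B) : pathEntry n N A < pathEntry n N B := by
  obtain ⟨j, hj, rfl⟩ := hB
  obtain ⟨i, hi, rfl⟩ := (h j hj).mem_of_northWest hAB hne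
  rw [h.pathEntry_apply hj, h.pathEntry_apply (hi.trans hj)]
  exact Nat.succ_lt_succ hi

lemma IsPath.bijOn_pathEntry (h : IsPath ℓ n N) :
    Set.BijOn (pathEntry n N) (N '' Set.Iio n) (Set.Icc 1 n) := by
  refine ⟨?_, ?_, fun k hk => ?_⟩
  · rintro _ ⟨i, hi, rfl⟩
    rw [h.pathEntry_apply hi]
    exact ⟨Nat.succ_pos i, hi⟩
  · rintro _ ⟨i, hi, rfl⟩ _ ⟨j, hj, rfl⟩ hij
    rw [h.pathEntry_apply hi, h.pathEntry_apply hj] at hij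
    rw [Nat.succ_injective hij]
  · obtain ⟨k, rfl⟩ := Nat.exists_eq_succ_of_ne_zero (Nat.one_le_iff_ne_zero.1 hk.1)
    exact ⟨N k, Set.mem_image_of_mem N hk.2, h.pathEntry_apply hk.2⟩

/-- The standard tableau that contains the entry `k + 1` in the node `N k`. -/
noncomputable def StdTableau.ofPath (h : IsPath ℓ n N) : StdTableau ℓ n where
  shape := .ofDiagram h.isDiagramSet h.ncard
  entry := pathEntry n N
  entry_zero A hA := by
    rw [Multipartition.diagram_ofDiagram] at hA
    rw [pathEntry, if_neg hA]
  bijOn := by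
    rw [Multipartition.diagram_ofDiagram]
    exact h.bijOn_pathEntry
  row_inc l r c hA := by
    rw [Multipartition.diagram_ofDiagram] at hA
    exact h.pathEntry_lt hA ⟨rfl, le_rfl, c.le_succ⟩ (by simp)
  col_inc l r c hA := by
    rw [Multipartition.diagram_ofDiagram] at hA
    exact h.pathEntry_lt hA ⟨rfl, r.le_succ, le_rfl⟩ (by simp)

namespace StdTableau

lemma node_mem (T : StdTableau ℓ n) {k : ℕ} (hk : k < n) : T.node (k + 1) ∈ T.shape.diagram :=
  Function.invFunOn_mem (T.bijOn.surjOn ⟨k.succ_pos, hk⟩)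

lemma entry_node (T : StdTableau ℓ n) {k : ℕ} (hk : k < n) : T.entry (T.node (k + 1)) = k + 1 :=
  Function.invFunOn_eq (T.bijOn.surjOn ⟨k.succ_pos, hk⟩)

lemma node_entry (T : StdTableau ℓ n) {A : Node} (hA : A ∈ T.shape.diagram) :
    T.node (T.entry A) = A :=
  T.bijOn.injOn.leftInvOn_invFunOn hA

lemma node_ofPath (h : IsPath ℓ n N) {k : ℕ} (hk : k < n) :
    (StdTableau.ofPath h).node (k + 1) = N k := by
  rw [← h.pathEntry_apply hk]
  refine (StdTableau.ofPath h).node_entry ?_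
  rw [StdTableau.ofPath, Multipartition.diagram_ofDiagram]
  exact Set.mem_image_of_mem N hk

lemma isDiagramSet_restDiag (T : StdTableau ℓ n) (m : ℕ) : IsDiagramSet ℓ (restDiag T m) := by
  refine ⟨(T.bijOn.finite_iff_finite.2 (Set.finite_Icc 1 n)).subset fun A hA => hA.1, ?_, ?_, ?_⟩
  · rintro ⟨l, r, c⟩ ⟨hA : c < T.shape.part l r, -⟩
    by_contra hl
    rw [T.shape.comp_bound l (not_lt.1 hl) r] at hA
    exact Nat.not_lt_zero c hA
  · rintro l r c ⟨hA, hm⟩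
    exact ⟨(Nat.lt_succ_self c).trans hA, (T.row_inc l r c hA).le.trans hm⟩
  · rintro l r c ⟨hA, hm⟩
    exact ⟨lt_of_lt_of_le hA (T.shape.antitone l r.le_succ), (T.col_inc l r c hA).le.trans hm⟩

lemma image_node_Iio (T : StdTableau ℓ n) {m : ℕ} (hm : m ≤ n) :
    (fun k => T.node (k + 1)) '' Set.Iio m = restDiag T m := by
  ext A
  constructor
  · rintro ⟨k, hk : k < m, rfl⟩
    exact ⟨T.node_mem (hk.trans_le hm), (T.entry_node (hk.trans_le hm)).trans_le hk⟩
  · rintro ⟨hA, hAm⟩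
    have entry_pos := (T.bijOn.mapsTo hA).1
    refine ⟨T.entry A - 1, Set.mem_Iio.2 (by omega), ?_⟩
    dsimp only
    rw [Nat.sub_add_cancel entry_pos, T.node_entry hA]

lemma isPath (T : StdTableau ℓ n) : IsPath ℓ n fun k => T.node (k + 1) := by
  refine isPath_iff.2 ⟨fun i hi j hj hij => ?_, fun m hm => ?_⟩
  · have entry_eq := congrArg T.entry hij
    simp only [T.entry_node hi, T.entry_node hj] at entry_eq
    exact Nat.succ_injective entry_eq
  · rw [T.image_node_Iio hm]
    exact T.isDiagramSet_restDiag m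

lemma restDiag_self (T : StdTableau ℓ n) : restDiag T n = T.shape.diagram :=
  Set.ext fun _ => and_iff_left_of_imp fun hA => (T.bijOn.mapsTo hA).2

lemma eq_of_node_eq {S T : StdTableau ℓ n} (h : ∀ k < n, S.node (k + 1) = T.node (k + 1)) :
    S = T := by
  have diagram_eq : S.shape.diagram = T.shape.diagram := by
    rw [← S.restDiag_self, ← T.restDiag_self, ← S.image_node_Iio le_rfl, ← T.image_node_Iio le_rfl]
    exact Set.image_congr h
  have part_eq : S.shape.part = T.shape.part := by
    funext l r
    exact eq_of_forall_lt_iff fun c => Set.ext_iff.1 diagram_eq (l, r, c)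
  have entry_eq : S.entry = T.entry := by
    funext A
    by_cases hA : A ∈ S.shape.diagram
    · obtain ⟨k, hk, rfl⟩ : A ∈ (fun k => S.node (k + 1)) '' Set.Iio n := by
        rwa [S.image_node_Iio le_rfl, S.restDiag_self]
      dsimp only
      rw [S.entry_node hk, h k hk, T.entry_node hk]
    · rw [S.entry_zero A hA, T.entry_zero A (diagram_eq ▸ hA)]
  rcases S with ⟨⟨_, _, _, _, _⟩, _, _, _, _, _⟩
  rcases T with ⟨⟨_, _, _, _, _⟩, _, _, _, _, _⟩
  obtain rfl := part_eq
  obtain rfl := entry_eq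
  rfl

lemma node_mem_product (T : StdTableau ℓ n) {k : ℕ} (hk : k < n) :
    T.node (k + 1) ∈ Finset.range ℓ ×ˢ Finset.range n ×ˢ Finset.range n := by
  have mem : T.node (k + 1) ∈ (fun k => T.node (k + 1)) '' Set.Iio n := ⟨k, hk, rfl⟩
  have bounds := T.isPath.isDiagramSet.lt_ncard mem
  rw [T.isPath.ncard] at bounds
  simpa only [Finset.mem_product, Finset.mem_range]
    using ⟨T.isPath.isDiagramSet.2.1 _ mem, bounds⟩

instance finite : Finite (StdTableau ℓ n) := by
  refine Finite.of_injective (β := Fin n → ↥(Finset.range ℓ ×ˢ Finset.range n ×ˢ Finset.range n))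
    (fun T k => ⟨T.node (k + 1), T.node_mem_product k.2⟩) fun S T h => ?_
  exact eq_of_node_eq fun k hk => congrArg Subtype.val (congrFun h ⟨k, hk⟩)

lemma content_mem_contFinset (κ : ℕ → ℤ) (T : StdTableau ℓ n) {k : ℕ} (hk : k < n) :
    content κ T (k + 1) ∈ contFinset ℓ n κ :=
  Finset.mem_filter.2 ⟨Finset.mem_image.2 ⟨_, T.node_mem_product hk, rfl⟩,
    T, k + 1, k.succ_pos, hk, rfl⟩

lemma eq_of_qintU_content_eq {R : Type*} [CommRing R] [Nontrivial R] {t : Rˣ} {κ : ℕ → ℤ}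
    (hs : SeparatesU t n ℓ κ) {S T : StdTableau ℓ n}
    (h : ∀ k < n, qintU t (content κ S (k + 1)) = qintU t (content κ T (k + 1))) : S = T := by
  refine eq_of_node_eq fun k => ?_
  induction k using Nat.strong_induction_on with
  | _ k ih =>
    intro hk
    by_contra hne
    have addable := S.isPath k hk
    rw [Set.image_congr fun j (hj : j ∈ Set.Iio k) => ih j hj (hj.trans hk)] at addable
    have card_le : ((fun k => T.node (k + 1)) '' Set.Iio k).ncard + 1 + |0| ≤ (n : ℤ) := by
      rw [(T.isPath.mono hk.le).ncard, abs_zero]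
      omega
    have unit := addable.isUnit_qintU_sub_qintU hs (T.isPath k hk) (by simp)
      (fun h => absurd h hne) card_le
    rw [add_zero] at unit
    exact unit.ne_zero (sub_eq_zero.2 (h k hk))

end StdTableau

end Tableau

section HeckeRelations

open Polynomial

variable {K A B : Type*} [CommRing K] [Ring A] [Algebra K A] [Ring B] [Algebra K B]

lemma aeval_mul_of_mul_eq {x y z : A} (h : x * z = z * y) (p : K[X]) :
    aeval x p * z = z * aeval y p := by
  induction p using Polynomial.induction_on' with
  | add p q hp hq => rw [map_add, map_add, add_mul, mul_add, hp, hq]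
  | monomial k a =>
    have pow : SemiconjBy z (y ^ k) (x ^ k) := SemiconjBy.pow_right h.symm k
    rw [aeval_monomial, aeval_monomial, mul_assoc, ← pow.eq, ← mul_assoc, Algebra.commutes,
      mul_assoc]

/-- The relations between Jucys–Murphy elements `L 0, …, L (n - 1)` and generators
`T 0, …, T (n - 2)` in a quotient of the cyclotomic Hecke algebra. Indices live in `ℕ`, and the
values of `L` and `T` outside these ranges are unconstrained. -/
structure HeckeRelations (n ℓ : ℕ) (κ : ℕ → ℤ) (t : Kˣ) (L T : ℕ → A) : Prop where
  cyclotomic : 0 < n → aeval (L 0) (∏ l ∈ Finset.range ℓ, (X - C (qintU t (κ l)))) = 0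
  quadratic : ∀ r, r + 1 < n → (T r + 1) * (T r - algebraMap K A t) = 0
  commute : ∀ j k, j < n → k < n → Commute (L j) (L k)
  braid : ∀ r, r + 2 < n → T r * T (r + 1) * T r = T (r + 1) * T r * T (r + 1)
  commute_of_ne : ∀ r k, r + 1 < n → k < n → k ≠ r → k ≠ r + 1 → Commute (L k) (T r)
  succ_mul : ∀ r, r + 1 < n → L (r + 1) * (T r - algebraMap K A t + 1) = T r * L r + 1

/-- The element `Φ_r = T_r (L_r - L_{r+1}) + (t - 1) L_{r+1} + 1`, which interchanges `L_r` and
`L_{r+1}`. -/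
def intertwiner (t : Kˣ) (L T : ℕ → A) (r : ℕ) : A :=
  T r * (L r - L (r + 1)) + ((t : K) - 1) • L (r + 1) + 1

namespace HeckeRelations

variable {n ℓ : ℕ} {κ : ℕ → ℤ} {t : Kˣ} {L T : ℕ → A}

lemma map (h : HeckeRelations n ℓ κ t L T) (f : A →ₐ[K] B) :
    HeckeRelations n ℓ κ t (f ∘ L) (f ∘ T) where
  cyclotomic hn := by
    rw [Function.comp_apply, aeval_algHom_apply, h.cyclotomic hn, map_zero]
  quadratic r hr := by simpa using congrArg f (h.quadratic r hr)
  commute j k hj hk := (h.commute j k hj hk).map f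
  braid r hr := by simpa using congrArg f (h.braid r hr)
  commute_of_ne r k hr hk hkr hkr' := (h.commute_of_ne r k hr hk hkr hkr').map f
  succ_mul r hr := by simpa using congrArg f (h.succ_mul r hr)

lemma mulLeft (h : HeckeRelations n ℓ κ t L T) :
    HeckeRelations n ℓ κ t (LinearMap.mulLeft K ∘ L) (LinearMap.mulLeft K ∘ T) :=
  h.map (Algebra.lmul K A)

lemma T_mul_T (h : HeckeRelations n ℓ κ t L T) {r : ℕ} (hr : r + 1 < n) :
    T r * T r = ((t : K) - 1) • T r + (t : K) • (1 : A) := by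
  have quadratic := h.quadratic r hr
  rw [Algebra.algebraMap_eq_smul_one, add_mul, mul_sub, mul_smul_comm, mul_one, one_mul]
    at quadratic
  rw [sub_smul, one_smul, ← sub_eq_zero, ← quadratic]
  abel

lemma succ_mul_T (h : HeckeRelations n ℓ κ t L T) {r : ℕ} (hr : r + 1 < n) :
    L (r + 1) * T r = T r * L r + 1 + ((t : K) - 1) • L (r + 1) := by
  have succ_mul := h.succ_mul r hr
  rw [Algebra.algebraMap_eq_smul_one, mul_add, mul_sub, mul_smul_comm, mul_one] at succ_mul
  rw [← succ_mul, sub_smul, one_smul]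
  abel

lemma smul_succ (h : HeckeRelations n ℓ κ t L T) {r : ℕ} (hr : r + 1 < n) :
    (t : K) • L (r + 1) = T r * L r * T r + T r := by
  have key : L (r + 1) * T r * T r =
      L (r + 1) * (((t : K) - 1) • T r + (t : K) • (1 : A)) := by
    rw [mul_assoc, h.T_mul_T hr]
  simp only [h.succ_mul_T hr, add_mul, mul_add, mul_smul_comm, smul_mul_assoc, mul_one,
    one_mul] at key
  rw [← sub_eq_zero] at key ⊢
  rw [← neg_eq_zero, ← key]
  module

lemma mul_T (h : HeckeRelations n ℓ κ t L T) {r : ℕ} (hr : r + 1 < n) :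
    L r * T r = T r * L (r + 1) - 1 - ((t : K) - 1) • L (r + 1) := by
  have expand : T r * (T r * L r * T r + T r) =
      ((t : K) - 1) • ((t : K) • L (r + 1)) + (t : K) • (L r * T r) + (t : K) • (1 : A) := by
    rw [h.smul_succ hr, mul_add, ← mul_assoc, ← mul_assoc, h.T_mul_T hr]
    simp only [add_mul, smul_mul_assoc, one_mul, mul_assoc]
    module
  rw [← h.smul_succ hr, mul_smul_comm] at expand
  have cancel : (t : K) • (L r * T r) =
      (t : K) • (T r * L (r + 1) - 1 - ((t : K) - 1) • L (r + 1)) := by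
    rw [smul_sub, smul_sub, expand]
    module
  exact smul_left_cancel t cancel

lemma mul_intertwiner (h : HeckeRelations n ℓ κ t L T) {r : ℕ} (hr : r + 1 < n) :
    L r * intertwiner t L T r = intertwiner t L T r * L (r + 1) := by
  have comm := (h.commute (r + 1) r hr (by omega)).eq
  have mul_T_mul (z : A) := congrArg (· * z) (h.mul_T hr)
  simp only [mul_assoc] at mul_T_mul
  simp only [intertwiner, mul_add, add_mul, mul_sub, sub_mul, smul_mul_assoc, mul_smul_comm,
    mul_assoc, mul_one, one_mul, mul_T_mul, comm]
  module

lemma succ_mul_intertwiner (h : HeckeRelations n ℓ κ t L T) {r : ℕ} (hr : r + 1 < n) :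
    L (r + 1) * intertwiner t L T r = intertwiner t L T r * L r := by
  have comm := (h.commute (r + 1) r hr (by omega)).eq
  have succ_mul_T_mul (z : A) := congrArg (· * z) (h.succ_mul_T hr)
  simp only [mul_assoc] at succ_mul_T_mul
  simp only [intertwiner, mul_add, add_mul, mul_sub, sub_mul, smul_mul_assoc, mul_smul_comm,
    mul_assoc, mul_one, one_mul, succ_mul_T_mul, comm]
  module

lemma intertwiner_mul_intertwiner (h : HeckeRelations n ℓ κ t L T) {r : ℕ} (hr : r + 1 < n) :
    intertwiner t L T r * intertwiner t L T r =
      -((L (r + 1) - (t : K) • L r - 1) * ((t : K) • L (r + 1) + 1 - L r)) := by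
  have comm := (h.commute (r + 1) r hr (by omega)).eq
  have mul_T_mul (z : A) := congrArg (· * z) (h.mul_T hr)
  have succ_mul_T_mul (z : A) := congrArg (· * z) (h.succ_mul_T hr)
  have T_mul_T_mul (z : A) := congrArg (· * z) (h.T_mul_T hr)
  simp only [mul_assoc] at mul_T_mul succ_mul_T_mul T_mul_T_mul
  simp only [intertwiner, mul_add, add_mul, mul_sub, sub_mul, smul_mul_assoc, mul_smul_comm,
    mul_assoc, mul_one, one_mul, smul_add, smul_sub, comm, mul_T_mul, succ_mul_T_mul,
    T_mul_T_mul]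
  module

lemma commute_intertwiner (h : HeckeRelations n ℓ κ t L T) {r k : ℕ} (hr : r + 1 < n) (hk : k < n)
    (hkr : k ≠ r) (hkr' : k ≠ r + 1) : Commute (L k) (intertwiner t L T r) :=
  have comm_L (j : ℕ) (hj : j < n) : Commute (L k) (L j) := h.commute k j hk hj
  (((h.commute_of_ne r k hr hk hkr hkr').mul_right
    ((comm_L r (by omega)).sub_right (comm_L (r + 1) hr))).add_right
      ((comm_L (r + 1) hr).smul_right _)).add_right (Commute.one_right _)

end HeckeRelations

end HeckeRelations

section Diagonalisable

open Polynomial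

variable {K V : Type*} [Field K] [AddCommGroup V] [Module K V] {f : Module.End K V}
  {S : Finset K}

lemma eval_prod_X_sub_C_ne_zero {x : K} (hx : x ∉ S) : (∏ β ∈ S, (X - C β)).eval x ≠ 0 := by
  rw [eval_prod, Finset.prod_ne_zero_iff]
  intro β hβ
  rw [eval_sub, eval_X, eval_C, sub_ne_zero]
  rintro rfl
  exact hx hβ

lemma mem_of_aeval_prod_apply_eq_zero {v : V} {x : K} (hv : v ≠ 0) (hx : f v = x • v)
    (hS : aeval f (∏ β ∈ S, (X - C β)) v = 0) : x ∈ S := by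
  by_contra hxS
  rw [Module.End.aeval_apply_of_mem_apply_eq_smul hx] at hS
  exact smul_ne_zero (eval_prod_X_sub_C_ne_zero hxS) hv hS

lemma apply_eq_smul_of_aeval_prod_apply_eq_zero {u : V} {x : K}
    (hu : aeval f (∏ β ∈ S, (X - C β)) u = 0)
    (hx : f (f u - x • u) = x • (f u - x • u)) : f u = x • u := by
  have dvd : ∏ β ∈ S, (X - C β) ∣ (∏ β ∈ S.erase x, (X - C β)) * (X - C x) := by
    by_cases hxS : x ∈ S
    · rw [Finset.prod_erase_mul _ _ hxS]
    · rw [Finset.erase_eq_of_notMem hxS]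
      exact dvd_mul_right _ _
  obtain ⟨q, hq⟩ := dvd
  have kill : aeval f (∏ β ∈ S.erase x, (X - C β)) (f u - x • u) = 0 := by
    have factor : f u - x • u = aeval f (X - C x) u := by
      simp [Module.algebraMap_end_apply]
    rw [factor, ← Module.End.mul_apply, ← map_mul, hq, mul_comm, map_mul, Module.End.mul_apply, hu,
      map_zero]
  by_contra hne
  exact Finset.notMem_erase x S (mem_of_aeval_prod_apply_eq_zero (sub_ne_zero.2 hne) hx kill)

lemma aeval_apply_mem_of_mem_invtSubmodule {U : Submodule K V} (hU : U ∈ f.invtSubmodule)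
    (p : K[X]) {v : V} (hv : v ∈ U) : aeval f p v ∈ U := by
  induction p using Polynomial.induction_on' with
  | add p q hp hq =>
    rw [map_add, LinearMap.add_apply]
    exact U.add_mem hp hq
  | monomial k a =>
    rw [aeval_monomial, Module.End.mul_apply, Module.algebraMap_end_apply, Module.End.pow_apply]
    exact U.smul_mem a (Set.MapsTo.iterate (show Set.MapsTo f U U from hU) k hv)

lemma mem_of_forall_eigenvector_mem {U W : Submodule K V} (hU : U ∈ f.invtSubmodule)
    (hW : ∀ β ∈ S, ∀ u ∈ U, f u = β • u → u ∈ W) {v : V} (hv : v ∈ U)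
    (hS : aeval f (∏ β ∈ S, (X - C β)) v = 0) : v ∈ W := by
  induction S using Finset.induction_on generalizing v with
  | empty =>
    obtain rfl : v = 0 := by simpa using hS
    exact W.zero_mem
  | insert b S hb ih =>
    set p : K[X] := ∏ β ∈ S, (X - C β) with hp
    have eigen : f (aeval f p v) = b • aeval f p v := by
      rw [Finset.prod_insert hb, ← hp] at hS
      simpa [Module.algebraMap_end_apply, sub_eq_zero] using hS
    have mem_U : aeval f p v ∈ U := aeval_apply_mem_of_mem_invtSubmodule hU p hv
    have mem_W := hW b (Finset.mem_insert_self b S) _ mem_U eigen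
    have rest : v - (p.eval b)⁻¹ • aeval f p v ∈ W := by
      refine ih (fun β hβ => hW β (Finset.mem_insert_of_mem hβ))
        (U.sub_mem hv (U.smul_mem _ mem_U)) ?_
      rw [map_sub, map_smul, Module.End.aeval_apply_of_mem_apply_eq_smul eigen,
        inv_smul_smul₀ (eval_prod_X_sub_C_ne_zero hb), sub_self]
    simpa using W.add_mem rest (W.smul_mem (p.eval b)⁻¹ mem_W)

lemma aeval_prod_filter_apply_eq_zero {U : Submodule K V} (hU : U ∈ f.invtSubmodule)
    {p : K → Prop} (hp : ∀ β ∈ S, ∀ u ∈ U, u ≠ 0 → f u = β • u → p β) {v : V} (hv : v ∈ U)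
    (hS : aeval f (∏ β ∈ S, (X - C β)) v = 0) :
    aeval f (∏ β ∈ S with p β, (X - C β)) v = 0 := by
  rw [← LinearMap.mem_ker]
  refine mem_of_forall_eigenvector_mem hU (fun β hβ u hu hx => ?_) hv hS
  rcases eq_or_ne u 0 with rfl | hne
  · exact Submodule.zero_mem _
  · have root : (∏ β ∈ S with p β, (X - C β)).eval β = 0 := by
      rw [eval_prod]
      exact Finset.prod_eq_zero (Finset.mem_filter.2 ⟨hβ, hp β hβ u hu hne hx⟩) (by simp)
    rw [LinearMap.mem_ker, Module.End.aeval_apply_of_mem_apply_eq_smul hx, root, zero_smul]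

end Diagonalisable

section WeightSpace

open Polynomial

variable {K V : Type*} [Field K] [AddCommGroup V] [Module K V] {n ℓ k : ℕ} {κ : ℕ → ℤ} {t : Kˣ}
  {L T : ℕ → Module.End K V} {α : ℕ → K} {v : V}

/-- The simultaneous eigenspace of `L 0, …, L (k - 1)` with eigenvalues `α 0, …, α (k - 1)`. -/
def weightSpace (L : ℕ → Module.End K V) (k : ℕ) (α : ℕ → K) : Submodule K V :=
  ⨅ j, ⨅ _ : j < k, (L j).eigenspace (α j)

lemma mem_weightSpace : v ∈ weightSpace L k α ↔ ∀ j < k, L j v = α j • v := by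
  simp only [weightSpace, Submodule.mem_iInf, Module.End.mem_eigenspace_iff]

lemma weightSpace_antitone : Antitone fun k => weightSpace L k α := fun _ _ hjk _ hv =>
  mem_weightSpace.2 fun i hi => mem_weightSpace.1 hv i (hi.trans_le hjk)

lemma weightSpace_congr {β : ℕ → K} (h : ∀ j < k, α j = β j) :
    weightSpace L k α = weightSpace L k β :=
  iInf_congr fun j => iInf_congr fun hj => by rw [h j hj]

lemma mem_weightSpace_succ :
    v ∈ weightSpace L (k + 1) α ↔ v ∈ weightSpace L k α ∧ L k v = α k • v := by
  simp only [mem_weightSpace, Nat.lt_succ_iff_lt_or_eq, or_imp, forall_and, forall_eq]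

lemma mem_invtSubmodule_weightSpace {f : Module.End K V} (hf : ∀ j < k, Commute (L j) f) :
    weightSpace L k α ∈ f.invtSubmodule := by
  intro v hv
  refine mem_weightSpace.2 fun j hj => ?_
  rw [← Module.End.mul_apply, (hf j hj).eq, Module.End.mul_apply, mem_weightSpace.1 hv j hj,
    map_smul]

/-- The weight of the path `N`: its value at `j` is the quantum content `[c (N j)]_t`. -/
def contentWeight (κ : ℕ → ℤ) (t : Kˣ) (N : ℕ → Node) (j : ℕ) : K := qintU t (nodeContent κ (N j))

lemma contentWeight_comp (κ : ℕ → ℤ) (t : Kˣ) (N : ℕ → Node) (σ : ℕ → ℕ) :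
    contentWeight κ t (N ∘ σ) = contentWeight κ t N ∘ σ := rfl

lemma mem_weightSpace_update {N : ℕ → Node} {B : Node}
    (hv : v ∈ weightSpace L k (contentWeight κ t N)) (hB : L k v = qintU t (nodeContent κ B) • v) :
    v ∈ weightSpace L (k + 1) (contentWeight κ t (Function.update N k B)) := by
  refine mem_weightSpace_succ.2 ⟨?_, ?_⟩
  · rwa [weightSpace_congr fun j hj => ?_]
    rw [contentWeight, contentWeight, Function.update_of_ne hj.ne]
  · rwa [contentWeight, Function.update_self]

namespace HeckeRelations

lemma intertwiner_apply {r : ℕ} {x y : K} (hx : L r v = x • v) (hy : L (r + 1) v = y • v) :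
    intertwiner t L T r v = (x - y) • T r v + (((t : K) - 1) * y + 1) • v := by
  simp only [intertwiner, LinearMap.add_apply, LinearMap.sub_apply, LinearMap.smul_apply,
    Module.End.mul_apply, Module.End.one_apply, map_sub, map_smul, hx, hy]
  module

lemma intertwiner_intertwiner_apply (h : HeckeRelations n ℓ κ t L T) {r : ℕ} (hr : r + 1 < n)
    {x y : K} (hx : L r v = x • v) (hy : L (r + 1) v = y • v) :
    intertwiner t L T r (intertwiner t L T r v) =
      -((y - (t * x + 1)) * (t * y + 1 - x)) • v := by
  rw [← Module.End.mul_apply, h.intertwiner_mul_intertwiner hr]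
  simp only [LinearMap.neg_apply, LinearMap.add_apply, LinearMap.sub_apply, LinearMap.smul_apply,
    Module.End.mul_apply, Module.End.one_apply, map_add, map_sub, map_smul, hx, hy]
  module

lemma intertwiner_mem_weightSpace (h : HeckeRelations n ℓ κ t L T) {r : ℕ} (hr : r + 1 < k)
    (hk : k ≤ n) (hv : v ∈ weightSpace L k α) :
    intertwiner t L T r v ∈ weightSpace L k (α ∘ Equiv.swap r (r + 1)) := by
  refine mem_weightSpace.2 fun j hj => ?_
  rw [Function.comp_apply, ← Module.End.mul_apply]
  rcases eq_or_ne j r with rfl | hjr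
  · rw [h.mul_intertwiner (by omega), Equiv.swap_apply_left, Module.End.mul_apply,
      mem_weightSpace.1 hv _ hr, map_smul]
  rcases eq_or_ne j (r + 1) with rfl | hjr'
  · rw [h.succ_mul_intertwiner (by omega), Equiv.swap_apply_right, Module.End.mul_apply,
      mem_weightSpace.1 hv _ (by omega), map_smul]
  · rw [(h.commute_intertwiner (by omega) (by omega) hjr hjr').eq,
      Equiv.swap_apply_of_ne_of_ne hjr hjr', Module.End.mul_apply, mem_weightSpace.1 hv j hj,
      map_smul]

lemma commute_intertwiner_of_lt (h : HeckeRelations n ℓ κ t L T) {j r : ℕ} (hj : j < r)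
    (hr : r + 1 < n) : Commute (L j) (intertwiner t L T r) :=
  h.commute_intertwiner hr (by omega) (by omega) (by omega)

lemma T_apply_of_intertwiner_apply_eq_zero {r : ℕ} {a b : ℤ} (hx : L r v = qintU t a • v)
    (hy : L (r + 1) v = qintU t b • v) (hne : (qintU t a : K) ≠ qintU t b)
    (h0 : intertwiner t L T r v = 0) :
    T r v = (((t ^ b : Kˣ) : K) / (qintU t b - qintU t a)) • v := by
  rw [intertwiner_apply hx hy, sub_one_mul_qintU_add_one, add_eq_zero_iff_eq_neg] at h0
  rw [div_eq_inv_mul, mul_smul, eq_inv_smul_iff₀ (sub_ne_zero.2 hne.symm), ← neg_sub, neg_smul, h0,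
    neg_neg]

end HeckeRelations

/-- On the joint eigenspace of `L 0, …, L (k - 1)` of weight `N`, the operator `L k` is
diagonalisable and its eigenvalues are quantum contents of addable nodes of
`{N 0, …, N (k - 1)}`. -/
def HasAddableSpectrum (ℓ : ℕ) (κ : ℕ → ℤ) (t : Kˣ) (L : ℕ → Module.End K V) (k : ℕ)
    (N : ℕ → Node) : Prop :=
  ∃ S : Finset K, (∀ β ∈ S, ∃ B, Addable ℓ (N '' Set.Iio k) B ∧ β = qintU t (nodeContent κ B)) ∧
    ∀ v ∈ weightSpace L k (contentWeight κ t N), aeval (L k) (∏ β ∈ S, (X - C β)) v = 0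

variable {N : ℕ → Node}

lemma HasAddableSpectrum.exists_addable (h : HasAddableSpectrum ℓ κ t L k N)
    (hv : v ∈ weightSpace L k (contentWeight κ t N)) (hv0 : v ≠ 0) {x : K} (hx : L k v = x • v) :
    ∃ B, Addable ℓ (N '' Set.Iio k) B ∧ x = qintU t (nodeContent κ B) := by
  obtain ⟨S, addable, kill⟩ := h
  exact addable x (mem_of_aeval_prod_apply_eq_zero hv0 hx (kill v hv))

lemma hasAddableSpectrum_of_finset (S : Finset K)
    (hinv : weightSpace L k (contentWeight κ t N) ∈ (L k).invtSubmodule)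
    (kill : ∀ v ∈ weightSpace L k (contentWeight κ t N), aeval (L k) (∏ β ∈ S, (X - C β)) v = 0)
    (addable : ∀ β ∈ S, ∀ v ∈ weightSpace L k (contentWeight κ t N), v ≠ 0 → L k v = β • v →
      ∃ B, Addable ℓ (N '' Set.Iio k) B ∧ β = qintU t (nodeContent κ B)) :
    HasAddableSpectrum ℓ κ t L k N :=
  ⟨S.filter fun β => ∃ B, Addable ℓ (N '' Set.Iio k) B ∧ β = qintU t (nodeContent κ B),
    fun _ hβ => (Finset.mem_filter.1 hβ).2,
    fun v hv => aeval_prod_filter_apply_eq_zero hinv addable hv (kill v hv)⟩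

lemma HasAddableSpectrum.eq_zero_of_eigenvalue_eq (h : HasAddableSpectrum ℓ κ t L k N)
    (hH : HeckeRelations n ℓ κ t L T) (hk : k + 1 < n)
    (hv : v ∈ weightSpace L k (contentWeight κ t N)) {x : K} (hx : L k v = x • v)
    (hx' : L (k + 1) v = x • v) : v = 0 := by
  by_contra hv0
  obtain ⟨B, -, rfl⟩ := h.exists_addable hv hv0 hx
  obtain ⟨S, -, kill⟩ := h
  set x : K := qintU t (nodeContent κ B)
  have shift : L k (T k v) - x • T k v = -((((t : K) - 1) * x + 1) • v) := by
    rw [← Module.End.mul_apply, hH.mul_T hk]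
    simp only [LinearMap.sub_apply, LinearMap.smul_apply, Module.End.mul_apply,
      Module.End.one_apply, hx', map_smul]
    module
  have T_mem : T k v ∈ weightSpace L k (contentWeight κ t N) :=
    mem_invtSubmodule_weightSpace (fun j hj =>
      hH.commute_of_ne k j hk (by omega) (by omega) (by omega)) hv
  have eigen := apply_eq_smul_of_aeval_prod_apply_eq_zero (kill _ T_mem) (x := x) <| by
    rw [shift, map_neg, map_smul, hx, smul_neg, smul_comm]
  rw [eigen, sub_self, eq_comm, neg_eq_zero, sub_one_mul_qintU_add_one] at shift
  exact smul_ne_zero (Units.ne_zero _) hv0 shift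

end WeightSpace

section Spectrum

open Polynomial

variable {K V : Type*} [Field K] [AddCommGroup V] [Module K V] {n ℓ k : ℕ} {κ : ℕ → ℤ} {t : Kˣ}
  {L T : ℕ → Module.End K V} {N : ℕ → Node} {v : V} {ε : ℤ}

lemma SeparatesU.zpow_add_zpow_ne_zero (hs : SeparatesU t n ℓ κ) (hn : 2 ≤ n) {a b : ℤ}
    (hab : |a - b| = 1) : ((t ^ a : Kˣ) : K) + (t ^ b : Kˣ) ≠ 0 := by
  wlog hlt : b < a generalizing a b
  · rw [add_comm]
    exact this (by rwa [abs_sub_comm]) (by grind)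
  obtain rfl : a = b + 1 := by grind
  have factor : ((t ^ (b + 1) : Kˣ) : K) + (t ^ b : Kˣ) = (t ^ b : Kˣ) * qintU t 2 := by
    rw [show (2 : ℤ) = 1 + 1 by norm_num, qintU_add_one, qintU_one, zpow_add_one, Units.val_mul]
    ring
  rw [factor]
  exact mul_ne_zero (Units.ne_zero _) (hs.isUnit_qintU two_ne_zero (by simpa using hn)).ne_zero

lemma eq_of_braid_of_apply_eq_smul {f g : Module.End K V} (braid : f * g * f = g * f * g)
    {a b : K} (ha : a ≠ 0) (hb : b ≠ 0) (hv : v ≠ 0) (hf : f v = a • v) (hg : g v = b • v) :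
    a = b := by
  have key := LinearMap.congr_fun braid v
  simp only [Module.End.mul_apply, hf, hg, map_smul, smul_smul] at key
  have scalars := smul_left_injective K hv key
  refine mul_left_cancel₀ (mul_ne_zero ha hb) ?_
  linear_combination scalars

namespace HeckeRelations

lemma intertwiner_mem_weightSpace_of_le {α : ℕ → K} (h : HeckeRelations n ℓ κ t L T) {r : ℕ}
    (hk : k ≤ r) (hr : r + 1 < n) (hv : v ∈ weightSpace L k α) :
    intertwiner t L T r v ∈ weightSpace L k α :=
  mem_invtSubmodule_weightSpace
    (fun _ hi => h.commute_intertwiner_of_lt (hi.trans_le hk) hr) hv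

lemma intertwiner_apply_eq_zero_of_spectrum (h : HeckeRelations n ℓ κ t L T)
    (hs : SeparatesU t n ℓ κ) (hk : k + 1 < n) (hN : IsPath ℓ (k + 1) N) (hε : |ε| = 1)
    (hspec : HasAddableSpectrum ℓ κ t L k N) (hv : v ∈ weightSpace L k (contentWeight κ t N))
    (hx : L (k + 1) v = (qintU t (nodeContent κ (N k) + ε) : K) • v) :
    intertwiner t L T k v = 0 := by
  by_contra hne
  obtain ⟨B, hB, hB'⟩ := hspec.exists_addable (x := qintU t (nodeContent κ (N k) + ε))
    (h.intertwiner_mem_weightSpace_of_le le_rfl hk hv) hne (by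
      rw [← Module.End.mul_apply, h.mul_intertwiner hk, Module.End.mul_apply, hx, map_smul])
  exact hN.qintU_nodeContent_add_ne hs hk hB hε hB'

lemma intertwiner_succ_apply_eq_zero_of_spectrum (h : HeckeRelations n ℓ κ t L T)
    (hk : k + 2 < n) (hspec : HasAddableSpectrum ℓ κ t L k N)
    (hv : v ∈ weightSpace L k (contentWeight κ t N)) {x : K} (hx : L k v = x • v)
    (hx' : L (k + 2) v = x • v) : intertwiner t L T (k + 1) v = 0 := by
  refine hspec.eq_zero_of_eigenvalue_eq h (by omega) (x := x)
    (h.intertwiner_mem_weightSpace_of_le k.le_succ hk hv) ?_ ?_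
  · rw [← Module.End.mul_apply, (h.commute_intertwiner_of_lt k.lt_succ_self hk).eq,
      Module.End.mul_apply, hx, map_smul]
  · rw [← Module.End.mul_apply, h.mul_intertwiner hk, Module.End.mul_apply, hx', map_smul]

-- Both intertwiners kill `v`, so `T_k` and `T_{k+1}` act on it by scalars, and these would have
-- to agree by the braid relation.
lemma eq_zero_of_mem_weightSpace_of_apply_eq (h : HeckeRelations n ℓ κ t L T)
    (hs : SeparatesU t n ℓ κ) (hk : k + 2 < n) (hN : IsPath ℓ (k + 2) N) (hN' : N (k + 2) = N k)
    (hε : |ε| = 1) (hc : nodeContent κ (N (k + 1)) = nodeContent κ (N k) + ε)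
    (hspec : HasAddableSpectrum ℓ κ t L k N)
    (hv : v ∈ weightSpace L (k + 3) (contentWeight κ t N)) : v = 0 := by
  by_contra hv0
  set a := nodeContent κ (N k)
  have hx : L k v = (qintU t a : K) • v := mem_weightSpace.1 hv k (by omega)
  have hy : L (k + 1) v = (qintU t (a + ε) : K) • v := hc ▸ mem_weightSpace.1 hv (k + 1) (by omega)
  have hz : L (k + 2) v = (qintU t a : K) • v := by
    have := mem_weightSpace.1 hv (k + 2) (by omega)
    rwa [contentWeight, hN'] at this
  have hvk : v ∈ weightSpace L k (contentWeight κ t N) := weightSpace_antitone (by omega) hv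
  have hne : (qintU t a : K) - qintU t (a + ε) ≠ 0 := by
    rw [qintU_sub_qintU, sub_add_cancel_left]
    refine mul_ne_zero (Units.ne_zero _) (hs.isUnit_qintU (by grind) ?_).ne_zero
    rw [abs_neg]
    omega
  have hne' : (qintU t (a + ε) : K) - qintU t a ≠ 0 := by rwa [← neg_sub, neg_ne_zero]
  have scalars := eq_of_braid_of_apply_eq_smul (h.braid k hk)
    (div_ne_zero (Units.ne_zero _) hne') (div_ne_zero (Units.ne_zero _) hne) hv0
    (T_apply_of_intertwiner_apply_eq_zero hx hy (sub_ne_zero.1 hne)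
      (h.intertwiner_apply_eq_zero_of_spectrum hs (by omega) (hN.mono (by omega)) hε hspec hvk hy))
    (T_apply_of_intertwiner_apply_eq_zero hy hz (sub_ne_zero.1 hne')
      (h.intertwiner_succ_apply_eq_zero_of_spectrum hk hspec hvk hx hz))
  rw [div_eq_div_iff hne' hne, ← sub_eq_zero] at scalars
  refine hs.zpow_add_zpow_ne_zero (a := a) (b := a + ε) (by omega)
    (by rwa [sub_add_cancel_left, abs_neg]) ((mul_eq_zero.1 ?_).resolve_right hne)
  linear_combination scalars

lemma intertwiner_apply_ne_zero (h : HeckeRelations n ℓ κ t L T) (hs : SeparatesU t n ℓ κ)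
    (hk : k + 1 < n) (hN : IsPath ℓ (k + 2) N) (hNW : ¬ NorthWest (N k) (N (k + 1)))
    (hv : v ∈ weightSpace L (k + 2) (contentWeight κ t N)) (hv0 : v ≠ 0) :
    intertwiner t L T k v ≠ 0 := by
  intro h0
  have scalar := h.intertwiner_intertwiner_apply hk (mem_weightSpace.1 hv k (by omega))
    (mem_weightSpace.1 hv (k + 1) (by omega))
  rw [h0, map_zero, eq_comm, smul_eq_zero_iff_left hv0, neg_eq_zero, mul_eq_zero] at scalar
  have addable := hN.addable_of_not_northWest (by omega) hNW
  have card_le : ((N '' Set.Iio k).ncard : ℤ) + 1 + |1| ≤ n := by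
    rw [(hN.mono (by omega)).ncard, abs_one]
    omega
  have unit_low := addable.isUnit_qintU_sub_qintU hs (hN k (by omega)) (ε := 1) (by simp) (by simp)
    card_le
  have unit_high := (hN k (by omega)).isUnit_qintU_sub_qintU hs addable (ε := 1) (by simp) (by simp)
    card_le
  rw [qintU_add_one] at unit_low unit_high
  rcases scalar with low | high
  · exact unit_low.ne_zero low
  · refine unit_high.ne_zero ?_
    rw [← neg_eq_zero, neg_sub]
    exact high

lemma eq_zero_of_mem_weightSpace_of_removable (h : HeckeRelations n ℓ κ t L T)
    (hs : SeparatesU t n ℓ κ) {j : ℕ} (hj : j < k) (hk : k + 1 < n)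
    (hspec : ∀ i < k, ∀ N, IsPath ℓ i N → HasAddableSpectrum ℓ κ t L i N)
    (hN : IsPath ℓ (k + 1) N) (hN' : N (k + 1) = N j) (hrem : Removable ℓ (N '' Set.Iio k) (N j))
    (hε : |ε| = 1) (hc : nodeContent κ (N k) = nodeContent κ (N j) + ε)
    (hv : v ∈ weightSpace L (k + 2) (contentWeight κ t N)) : v = 0 := by
  induction hd : k - (j + 1) generalizing j N v with
  | zero =>
    obtain rfl : k = j + 1 := by omega
    exact h.eq_zero_of_mem_weightSpace_of_apply_eq hs hk hN hN' hε hc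
      (hspec j hj N (hN.mono (by omega))) hv
  | succ d ih =>
    by_contra hv0
    have hNW : ¬ NorthWest (N j) (N (j + 1)) := by
      refine hrem.not_northWest ⟨j + 1, Set.mem_Iio.2 (by omega), rfl⟩ fun hne => ?_
      have := hN.injOn (Set.mem_Iio.2 (by omega)) (Set.mem_Iio.2 (by omega)) hne
      omega
    refine h.intertwiner_apply_ne_zero hs (by omega) (hN.mono (by omega)) hNW
      (weightSpace_antitone (by omega) hv) hv0 ?_
    have swap_of_lt (m : ℕ) (hm : j + 1 < m) : (N ∘ Equiv.swap j (j + 1)) m = N m := by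
      rw [Function.comp_apply, Equiv.swap_apply_of_ne_of_ne (by omega) (by omega)]
    have swap_succ : (N ∘ Equiv.swap j (j + 1)) (j + 1) = N j := by
      rw [Function.comp_apply, Equiv.swap_apply_right]
    refine ih (j := j + 1) (N := N ∘ Equiv.swap j (j + 1)) (by omega) (hN.swap (by omega) hNW)
      ?_ ?_ ?_ ?_ (by omega)
    · rw [swap_succ, swap_of_lt _ (by omega), hN']
    · rwa [swap_succ, image_comp_swap_Iio N (by omega)]
    · rw [swap_succ, swap_of_lt _ (by omega), hc]
    · rw [contentWeight_comp]
      exact h.intertwiner_mem_weightSpace (by omega) (by omega) hv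

lemma hasAddableSpectrum_zero (h : HeckeRelations n ℓ κ t L T) (hs : SeparatesU t n ℓ κ)
    (hn : 0 < n) : HasAddableSpectrum ℓ κ t L 0 N := by
  refine ⟨(Finset.range ℓ).image fun l => qintU t (κ l), fun β hβ => ?_, fun v _ => ?_⟩
  · obtain ⟨l, hl, rfl⟩ := Finset.mem_image.1 hβ
    refine ⟨(l, 0, 0), ?_, by simp [nodeContent]⟩
    simpa using IsDiagramSet.empty.addable (Finset.mem_range.1 hl) (Set.notMem_empty _)
      (by omega) (by omega)
  · rw [Finset.prod_image fun l hl m hm hlm => ?_, h.cyclotomic hn, LinearMap.zero_apply]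
    by_contra hne
    have unit := hs.isUnit_qintU_charge hne (Finset.mem_range.1 hl) (Finset.mem_range.1 hm)
      (d := 0) (by simpa using hn)
    rw [add_zero, ← isUnit_qintU_sub_qintU] at unit
    exact unit.ne_zero (sub_eq_zero.2 hlm)

lemma aeval_apply_eq_zero_of_intertwiner_apply_eq_zero (h : HeckeRelations n ℓ κ t L T)
    (hk : k + 1 < n) {a : ℤ} (ha : L k v = (qintU t a : K) • v) (h0 : intertwiner t L T k v = 0) :
    aeval (L (k + 1)) ((X - C (qintU t (a + 1))) * (X - C (qintU t (a - 1)))) v = 0 := by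
  have ha' : L k (L (k + 1) v) = (qintU t a : K) • L (k + 1) v := by
    rw [← Module.End.mul_apply, (h.commute k (k + 1) (by omega) hk).eq, Module.End.mul_apply, ha,
      map_smul]
  have square := LinearMap.congr_fun (h.intertwiner_mul_intertwiner hk) v
  have qint_a : (qintU t a : K) = t * qintU t (a - 1) + 1 := by
    rw [← qintU_add_one, sub_add_cancel]
  simp only [Module.End.mul_apply, h0, map_zero, LinearMap.neg_apply, LinearMap.add_apply,
    LinearMap.sub_apply, LinearMap.smul_apply, Module.End.one_apply, map_add, map_sub, map_smul,
    ha, ha', qint_a] at square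
  rw [← smul_eq_zero_iff_right t.ne_zero, ← neg_eq_zero, square]
  simp only [map_mul, map_sub, aeval_X, aeval_C, Module.End.mul_apply, LinearMap.sub_apply,
    Module.algebraMap_end_apply, map_smul, qintU_add_one, qint_a]
  module

lemma aeval_succ_apply_eq_zero (h : HeckeRelations n ℓ κ t L T) (hk : k + 1 < n) {a : ℤ}
    {α : ℕ → K} (ha : α k = qintU t a) {p : K[X]}
    (hp : ∀ v ∈ weightSpace L k α, aeval (L k) p v = 0) (hv : v ∈ weightSpace L (k + 1) α) :
    aeval (L (k + 1)) ((X - C (qintU t (a + 1))) * (X - C (qintU t (a - 1))) * p) v = 0 := by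
  rw [map_mul, Module.End.mul_apply]
  refine h.aeval_apply_eq_zero_of_intertwiner_apply_eq_zero hk ?_ ?_
  · rw [← ha]
    refine mem_weightSpace.1 (aeval_apply_mem_of_mem_invtSubmodule
      (mem_invtSubmodule_weightSpace fun j hj => ?_) p hv) k k.lt_succ_self
    exact h.commute j (k + 1) (by omega) hk
  · rw [← Module.End.mul_apply, ← aeval_mul_of_mul_eq (h.mul_intertwiner hk) p,
      Module.End.mul_apply]
    exact hp _ (h.intertwiner_mem_weightSpace_of_le le_rfl hk (weightSpace_antitone k.le_succ hv))

lemma eq_zero_of_apply_eq_of_removable (h : HeckeRelations n ℓ κ t L T)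
    (hs : SeparatesU t n ℓ κ) (hk : k + 1 < n)
    (hspec : ∀ i < k, ∀ N, IsPath ℓ i N → HasAddableSpectrum ℓ κ t L i N)
    (hN : IsPath ℓ (k + 1) N) {A : Node} (hA : Removable ℓ (N '' Set.Iio k) A)
    (hε : |ε| = 1) (hc : nodeContent κ (N k) = nodeContent κ A + ε)
    (hv : v ∈ weightSpace L (k + 1) (contentWeight κ t N))
    (hx : L (k + 1) v = (qintU t (nodeContent κ A) : K) • v) : v = 0 := by
  obtain ⟨j, hj : j < k, rfl⟩ := hA.1
  have update_of_lt (i : ℕ) (hi : i < k + 1) : Function.update N (k + 1) (N j) i = N i :=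
    Function.update_of_ne hi.ne _ _
  refine h.eq_zero_of_mem_weightSpace_of_removable hs hj hk hspec (hN.update le_rfl (N j)) ?_ ?_ hε
    ?_ (mem_weightSpace_update hv hx)
  · rw [Function.update_self, update_of_lt j (by omega)]
  · rwa [image_update_Iio N k.le_succ, update_of_lt j (by omega)]
  · rwa [update_of_lt k (by omega), update_of_lt j (by omega)]

lemma exists_addable_of_apply_eq_add_one (h : HeckeRelations n ℓ κ t L T)
    (hs : SeparatesU t n ℓ κ) (hk : k + 1 < n)
    (hspec : ∀ i < k, ∀ N, IsPath ℓ i N → HasAddableSpectrum ℓ κ t L i N)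
    (hN : IsPath ℓ (k + 1) N) (hv : v ∈ weightSpace L (k + 1) (contentWeight κ t N))
    (hv0 : v ≠ 0) (hx : L (k + 1) v = (qintU t (nodeContent κ (N k) + 1) : K) • v) :
    ∃ B, Addable ℓ (N '' Set.Iio (k + 1)) B ∧ nodeContent κ B = nodeContent κ (N k) + 1 := by
  obtain ⟨l, r, c, hA⟩ : ∃ l r c, N k = (l, r, c) := ⟨_, _, _, rfl⟩
  have addable := hN k k.lt_succ_self
  rw [image_Iio_succ, hA]
  rw [hA] at addable hx
  refine ⟨(l, r, c + 1), ?_, by simp only [nodeContent]; push_cast; ring⟩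
  by_contra hright
  obtain ⟨r', rfl, hrem⟩ := addable.exists_removable_above (hN.mono k.le_succ).isDiagramSet hright
  have hc : nodeContent κ (l, r', c) = nodeContent κ (l, r' + 1, c) + 1 := by
    simp only [nodeContent]; push_cast; ring
  exact hv0 (h.eq_zero_of_apply_eq_of_removable hs hk hspec hN hrem (ε := -1) (by simp)
    (by rw [hA, hc]; ring) hv (by rwa [hc]))

lemma exists_addable_of_apply_eq_sub_one (h : HeckeRelations n ℓ κ t L T)
    (hs : SeparatesU t n ℓ κ) (hk : k + 1 < n)
    (hspec : ∀ i < k, ∀ N, IsPath ℓ i N → HasAddableSpectrum ℓ κ t L i N)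
    (hN : IsPath ℓ (k + 1) N) (hv : v ∈ weightSpace L (k + 1) (contentWeight κ t N))
    (hv0 : v ≠ 0) (hx : L (k + 1) v = (qintU t (nodeContent κ (N k) - 1) : K) • v) :
    ∃ B, Addable ℓ (N '' Set.Iio (k + 1)) B ∧ nodeContent κ B = nodeContent κ (N k) - 1 := by
  obtain ⟨l, r, c, hA⟩ : ∃ l r c, N k = (l, r, c) := ⟨_, _, _, rfl⟩
  have addable := hN k k.lt_succ_self
  rw [image_Iio_succ, hA]
  rw [hA] at addable hx
  refine ⟨(l, r + 1, c), ?_, by simp only [nodeContent]; push_cast; ring⟩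
  by_contra hbelow
  obtain ⟨c', rfl, hrem⟩ := addable.exists_removable_left (hN.mono k.le_succ).isDiagramSet hbelow
  have hc : nodeContent κ (l, r, c') = nodeContent κ (l, r, c' + 1) - 1 := by
    simp only [nodeContent]; push_cast; ring
  exact hv0 (h.eq_zero_of_apply_eq_of_removable hs hk hspec hN hrem (ε := 1) (by simp)
    (by rw [hA, hc]; ring) hv (by rwa [hc]))

lemma addable_succ_of_apply_eq (h : HeckeRelations n ℓ κ t L T) (hk : k + 1 < n)
    (hspec : HasAddableSpectrum ℓ κ t L k N) (hN : IsPath ℓ (k + 1) N) {B : Node}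
    (hB : Addable ℓ (N '' Set.Iio k) B) (hv : v ∈ weightSpace L (k + 1) (contentWeight κ t N))
    (hv0 : v ≠ 0) (hx : L (k + 1) v = (qintU t (nodeContent κ B) : K) • v) :
    Addable ℓ (N '' Set.Iio (k + 1)) B := by
  obtain ⟨hvk, hxk⟩ := mem_weightSpace_succ.1 hv
  rw [image_Iio_succ]
  refine hB.union_singleton (hN k k.lt_succ_self) ?_
  rintro rfl
  exact hv0 (hspec.eq_zero_of_eigenvalue_eq h hk hvk hxk hx)

lemma hasAddableSpectrum_succ (h : HeckeRelations n ℓ κ t L T) (hs : SeparatesU t n ℓ κ)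
    (hk : k + 1 < n) (hspec : ∀ i ≤ k, ∀ N, IsPath ℓ i N → HasAddableSpectrum ℓ κ t L i N)
    (hN : IsPath ℓ (k + 1) N) : HasAddableSpectrum ℓ κ t L (k + 1) N := by
  have hspec_lt : ∀ i < k, ∀ N, IsPath ℓ i N → HasAddableSpectrum ℓ κ t L i N :=
    fun i hi => hspec i hi.le
  obtain ⟨S, addable, kill⟩ := hspec k le_rfl N (hN.mono k.le_succ)
  set a := nodeContent κ (N k)
  have add_notMem {ε : ℤ} (hε : |ε| = 1) : (qintU t (a + ε) : K) ∉ S := by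
    intro hmem
    obtain ⟨B, hB, hB'⟩ := addable _ hmem
    exact hN.qintU_nodeContent_add_ne hs hk hB hε hB'
  have add_ne_sub : (qintU t (a + 1) : K) ≠ qintU t (a - 1) := by
    rw [← sub_ne_zero, qintU_sub_qintU]
    refine mul_ne_zero (Units.ne_zero _) (hs.isUnit_qintU (by omega) ?_).ne_zero
    rw [show a + 1 - (a - 1) = 2 by ring, abs_two]
    omega
  refine hasAddableSpectrum_of_finset (insert (qintU t (a + 1)) (insert (qintU t (a - 1)) S))
    (mem_invtSubmodule_weightSpace fun j hj => h.commute j (k + 1) (by omega) hk) ?_ ?_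
  · intro v hv
    rw [Finset.prod_insert, Finset.prod_insert, ← mul_assoc]
    · exact h.aeval_succ_apply_eq_zero hk rfl kill hv
    · exact add_notMem (by simp)
    · rw [Finset.mem_insert, not_or]
      exact ⟨add_ne_sub, add_notMem abs_one⟩
  · intro β hβ v hv hv0 hx
    rcases Finset.mem_insert.1 hβ with rfl | hβ
    · obtain ⟨B, hB, hB'⟩ := h.exists_addable_of_apply_eq_add_one hs hk hspec_lt hN hv hv0 hx
      exact ⟨B, hB, by rw [hB']⟩
    rcases Finset.mem_insert.1 hβ with rfl | hβ
    · obtain ⟨B, hB, hB'⟩ := h.exists_addable_of_apply_eq_sub_one hs hk hspec_lt hN hv hv0 hx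
      exact ⟨B, hB, by rw [hB']⟩
    · obtain ⟨B, hB, rfl⟩ := addable β hβ
      exact ⟨B, h.addable_succ_of_apply_eq hk ⟨S, addable, kill⟩ hN hB hv hv0 hx, rfl⟩

theorem hasAddableSpectrum (h : HeckeRelations n ℓ κ t L T) (hs : SeparatesU t n ℓ κ)
    (hk : k < n) (hN : IsPath ℓ k N) : HasAddableSpectrum ℓ κ t L k N := by
  induction k using Nat.strong_induction_on generalizing N with
  | _ k ih =>
    rcases k with _ | k
    · exact h.hasAddableSpectrum_zero hs hk
    · exact h.hasAddableSpectrum_succ hs hk (fun i hi _ => ih i (by omega) (by omega)) hN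

theorem eq_top_of_forall_weightSpace_le (h : HeckeRelations n ℓ κ t L T)
    (hs : SeparatesU t n ℓ κ) {W : Submodule K V}
    (hW : ∀ N, IsPath ℓ n N → weightSpace L n (contentWeight κ t N) ≤ W) : W = ⊤ := by
  have weightSpace_le (k : ℕ) (hk : k ≤ n) :
      ∀ N, IsPath ℓ k N → weightSpace L k (contentWeight κ t N) ≤ W := by
    induction hk using Nat.decreasingInduction with
    | self => exact hW
    | of_succ k hk ih =>
      intro N hN v hv
      obtain ⟨S, addable, kill⟩ := h.hasAddableSpectrum hs hk hN
      refine mem_of_forall_eigenvector_mem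
        (mem_invtSubmodule_weightSpace fun j hj => h.commute j k (hj.trans hk) hk)
        (fun β hβ u hu hx => ?_) hv (kill v hv)
      obtain ⟨B, hB, rfl⟩ := addable β hβ
      exact ih _ (hN.update_succ hB) (mem_weightSpace_update hu hx)
  refine top_le_iff.1 fun v _ =>
    weightSpace_le 0 n.zero_le (fun _ => default) (fun j hj => absurd hj j.not_lt_zero) ?_
  exact mem_weightSpace.2 fun j hj => absurd hj j.not_lt_zero

end HeckeRelations

end Spectrum

section ActsBy

variable {K H ι : Type*} [CommRing K] [Ring H] [Algebra K H]

/-- `ActsBy E x f` says that left multiplication by `x` is the scalar `f s` on `E s`, for every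
`s`. -/
def ActsBy (E : ι → Submodule K H) (x : H) (f : ι → K) : Prop :=
  ∀ s, ∀ v ∈ E s, x * v = f s • v

namespace ActsBy

variable {E : ι → Submodule K H} {x y : H} {f g : ι → K}

lemma const (c : K) : ActsBy E (algebraMap K H c) (fun _ => c) :=
  fun _ v _ => (Algebra.smul_def c v).symm

lemma one : ActsBy E 1 (fun _ => 1) := by
  simpa only [map_one] using const (E := E) 1

lemma add (hx : ActsBy E x f) (hy : ActsBy E y g) : ActsBy E (x + y) (fun s => f s + g s) :=
  fun s v hv => by rw [add_mul, hx s v hv, hy s v hv, add_smul]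

lemma sub (hx : ActsBy E x f) (hy : ActsBy E y g) : ActsBy E (x - y) (fun s => f s - g s) :=
  fun s v hv => by rw [sub_mul, hx s v hv, hy s v hv, sub_smul]

lemma mul (hx : ActsBy E x f) (hy : ActsBy E y g) : ActsBy E (x * y) (fun s => f s * g s) :=
  fun s v hv => by rw [mul_assoc, hy s v hv, mul_smul_comm, hx s v hv, smul_smul, mul_comm]

lemma list_prod {α : Type*} {x : α → H} {f : α → ι → K} (h : ∀ a, ActsBy E (x a) (f a))
    (l : List α) : ActsBy E (l.map x).prod (fun s => (l.map (f · s)).prod) := by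
  induction l with
  | nil => simpa only [List.map_nil, List.prod_nil] using one
  | cons a l ih => simpa only [List.map_cons, List.prod_cons] using (h a).mul ih

lemma sum {α : Type*} {x : α → H} {f : α → ι → K} (h : ∀ a, ActsBy E (x a) (f a))
    (l : Finset α) : ActsBy E (∑ a ∈ l, x a) (fun s => ∑ a ∈ l, f a s) := fun s v hv => by
  rw [Finset.sum_mul, Finset.sum_smul]
  exact Finset.sum_congr rfl fun a _ => h a s v hv

lemma eq (hE : ⨆ s, E s = ⊤) (hx : ActsBy E x f) (hy : ActsBy E y f) : x = y := by
  have hker : ⨆ s, E s ≤ LinearMap.ker (LinearMap.mulLeft K (x - y)) :=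
    iSup_le fun s v hv => by
      rw [LinearMap.mem_ker, LinearMap.mulLeft_apply, sub_mul, hx s v hv, hy s v hv, sub_self]
  have hone : (x - y) * 1 = 0 := hker (hE ▸ Submodule.mem_top)
  rwa [mul_one, sub_eq_zero] at hone

lemma exists_mem_eval {σ R : Type*} [CommRing R] [Algebra R K] [Algebra R H]
    (hcompat : ∀ r : R, algebraMap R H r = algebraMap K H (algebraMap R K r))
    {A : Subalgebra R H} {x : σ → H} (hxA : ∀ k, x k ∈ A)
    {c : ι → σ → R} (hx : ∀ k, ActsBy E (x k) (fun s => algebraMap R K (c s k)))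
    (p : MvPolynomial σ R) :
    ∃ y ∈ A, ActsBy E y (fun s => algebraMap R K (MvPolynomial.eval (c s) p)) := by
  induction p using MvPolynomial.induction_on with
  | C r =>
    refine ⟨algebraMap R H r, A.algebraMap_mem r, ?_⟩
    simpa only [MvPolynomial.eval_C, hcompat] using const _
  | add p q hp hq =>
    obtain ⟨y, hyA, hy⟩ := hp
    obtain ⟨z, hzA, hz⟩ := hq
    exact ⟨y + z, add_mem hyA hzA, by simpa only [map_add] using hy.add hz⟩
  | mul_X p k hp =>
    obtain ⟨y, hyA, hy⟩ := hp
    exact ⟨y * x k, mul_mem hyA (hxA k), by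
      simpa only [map_mul, MvPolynomial.eval_X] using hy.mul (hx k)⟩

end ActsBy

end ActsBy

section Interpolation

open MvPolynomial

variable {R : Type*} [CommRing R]

lemma exists_polynomial_mul_eval_eq_one (S : Finset R) (hS : ∀ u ∈ S, IsUnit u) :
    ∃ g : Polynomial R, ∀ u ∈ S, u * g.eval u = 1 := by
  induction S using Finset.induction_on with
  | empty => exact ⟨0, by simp⟩
  | insert a S _ ih =>
    obtain ⟨g, hg⟩ := ih fun u hu => hS u (Finset.mem_insert_of_mem hu)
    obtain ⟨b, hb⟩ := (hS a (Finset.mem_insert_self a S)).exists_right_inv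
    -- `1 - u h(u)` is the product of `1 - u g(u)` and `1 - b u`
    refine ⟨g + .C b - .C b * .X * g, fun u hu => ?_⟩
    simp only [Polynomial.eval_add, Polynomial.eval_sub, Polynomial.eval_mul, Polynomial.eval_C,
      Polynomial.eval_X]
    rcases Finset.mem_insert.1 hu with rfl | hu
    · linear_combination (1 - u * g.eval u) * hb
    · linear_combination (1 - b * u) * hg u hu

lemma exists_eval_eq_inv_on {ι σ : Type*} [Finite ι] {c : ι → σ → R} {P : ι → Prop}
    {φ a : MvPolynomial σ R} (hφ : ∀ s, P s → IsUnit (eval (c s) φ))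
    (ha : ∀ s, P s → IsUnit (eval (c s) a)) (ha' : ∀ s, ¬P s → eval (c s) a = 0) :
    ∃ ψ : MvPolynomial σ R, (∀ s, P s → eval (c s) φ * eval (c s) ψ = 1) ∧
      ∀ s, ¬P s → eval (c s) ψ = 0 := by
  have hfin : ((fun s => eval (c s) (φ * a)) '' {s | P s}).Finite := Set.toFinite _
  obtain ⟨g, hg⟩ := exists_polynomial_mul_eval_eq_one hfin.toFinset fun u hu => by
    obtain ⟨s, hs, rfl⟩ := hfin.mem_toFinset.1 hu
    simpa only [map_mul] using (hφ s hs).mul (ha s hs)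
  have eval_comp (s : ι) : eval (c s) (Polynomial.aeval (φ * a) g) =
      g.eval (eval (c s) (φ * a)) := by
    rw [← coe_aeval_eq_eval, ← Polynomial.coe_aeval_eq_eval]
    exact (Polynomial.aeval_algHom_apply (aeval (c s)) (φ * a) g).symm
  refine ⟨a * Polynomial.aeval (φ * a) g, fun s hs => ?_, fun s hs => ?_⟩
  · rw [map_mul, eval_comp, ← mul_assoc, ← map_mul]
    exact hg _ (hfin.mem_toFinset.2 ⟨s, hs, rfl⟩)
  · rw [map_mul, ha' s hs, zero_mul]

variable {n ℓ : ℕ}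

/-- The quantum contents `([c_1(T)]_t, …, [c_n(T)]_t)` of a standard tableau. -/
noncomputable def quantumContents (κ : ℕ → ℤ) (t : Rˣ) (T : StdTableau ℓ n) (k : Fin n) : R :=
  qintU t (content κ T (k.1 + 1))

/-- A polynomial that separates the tableaux of residue sequence `i` from all others: evaluated
at quantum contents it vanishes unless the residue sequence is `i`. -/
noncomputable def residuePolynomial (ℓ : ℕ) (e : ℕ) (κ : ℕ → ℤ) (t : Rˣ) (i : Fin n → ZMod e) :
    MvPolynomial (Fin n) R :=
  ∏ k, ∏ c ∈ contFinset ℓ n κ with ((c : ℤ) : ZMod e) ≠ i k, (X k - C (qintU t c))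

variable {e : ℕ} {κ : ℕ → ℤ} {t : Rˣ} {i : Fin n → ZMod e} {T : StdTableau ℓ n}

lemma eval_residuePolynomial :
    eval (quantumContents κ t T) (residuePolynomial ℓ e κ t i) =
      ∏ k : Fin n, ∏ c ∈ contFinset ℓ n κ with ((c : ℤ) : ZMod e) ≠ i k,
        (qintU t (content κ T (k.1 + 1)) - qintU t c) := by
  simp only [residuePolynomial, map_prod, map_sub, eval_X, eval_C, quantumContents]

lemma isUnit_eval_residuePolynomial (ht : ∀ k : ℤ, ¬(e : ℤ) ∣ k → IsUnit (qintU t k))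
    (hT : resSeq e κ T = i) :
    IsUnit (eval (quantumContents κ t T) (residuePolynomial ℓ e κ t i)) := by
  rw [eval_residuePolynomial, IsUnit.prod_univ_iff]
  refine fun k => IsUnit.prod_iff.2 fun c hc => ?_
  rw [qintU_sub_qintU]
  refine (Units.isUnit _).mul (ht _ fun hdvd => (Finset.mem_filter.1 hc).2 ?_)
  rw [← ZMod.intCast_zmod_eq_zero_iff_dvd, Int.cast_sub, sub_eq_zero] at hdvd
  rw [← hT, ← hdvd]
  rfl

lemma eval_residuePolynomial_of_ne (hT : resSeq e κ T ≠ i) :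
    eval (quantumContents κ t T) (residuePolynomial ℓ e κ t i) = 0 := by
  obtain ⟨k, hk⟩ := Function.ne_iff.1 hT
  rw [eval_residuePolynomial]
  refine Finset.prod_eq_zero (Finset.mem_univ k) (Finset.prod_eq_zero
    (Finset.mem_filter.2 ⟨StdTableau.content_mem_contFinset κ T k.2, hk⟩) (sub_self _))

end Interpolation

section CycHecke

variable (K : Type*) [CommRing K] (t : Kˣ) (n ℓ : ℕ) (κ : ℕ → ℤ)

/-- The generators `L_k` of the cyclotomic Hecke algebra indexed by `ℕ`, with value `0` for
`n ≤ k`. -/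
noncomputable def cycL (k : ℕ) : CycHecke K t n ℓ κ :=
  if h : k < n then Lgen K t n ℓ κ ⟨k, h⟩ else 0

/-- The generators `T_r` of the cyclotomic Hecke algebra indexed by `ℕ`, with value `0` for
`n - 1 ≤ r`. -/
noncomputable def cycT (r : ℕ) : CycHecke K t n ℓ κ :=
  if h : r < n - 1 then Tgen K t n ℓ κ ⟨r, h⟩ else 0

variable {n}

lemma cycL_eq {k : ℕ} (hk : k < n) : cycL K t n ℓ κ k = Lgen K t n ℓ κ ⟨k, hk⟩ := dif_pos hk

lemma cycT_eq {r : ℕ} (hr : r + 1 < n) :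
    cycT K t n ℓ κ r = Tgen K t n ℓ κ ⟨r, Nat.lt_sub_of_add_lt hr⟩ :=
  dif_pos (Nat.lt_sub_of_add_lt hr)

open Polynomial in
lemma aeval_Lgen_zero (hn : 0 < n) :
    aeval (Lgen K t n ℓ κ ⟨0, hn⟩) (∏ l ∈ Finset.range ℓ, (X - C (qintU t (κ l)))) = 0 := by
  have rel := RingQuot.mkAlgHom_rel K (HeckeRel.cyc (t := t) (ℓ := ℓ) (κ := κ) hn)
  rw [map_zero, map_list_prod, List.map_map] at rel
  rw [Finset.prod_eq_multiset_prod, Finset.range_val, ← Multiset.coe_range, Multiset.map_coe,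
    Multiset.prod_coe, map_list_prod, List.map_map, ← rel]
  congr 1
  refine List.map_congr_left fun l _ => ?_
  simp only [Function.comp_apply, map_sub, aeval_X, aeval_C, AlgHom.commutes]
  rfl

lemma heckeRelations_cycHecke :
    HeckeRelations n ℓ κ t (cycL K t n ℓ κ) (cycT K t n ℓ κ) where
  cyclotomic hn := by
    rw [cycL_eq K t ℓ κ hn]
    exact aeval_Lgen_zero K t ℓ κ hn
  quadratic r hr := by
    have rel := RingQuot.mkAlgHom_rel K
      (HeckeRel.quad (t := t) (ℓ := ℓ) (κ := κ) ⟨r, Nat.lt_sub_of_add_lt hr⟩)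
    simp only [map_mul, map_add, map_sub, map_one, map_zero, AlgHom.commutes] at rel
    rwa [cycT_eq K t ℓ κ hr]
  commute j k hj hk := by
    have rel := RingQuot.mkAlgHom_rel K
      (HeckeRel.LL (t := t) (ℓ := ℓ) (κ := κ) ⟨j, hj⟩ ⟨k, hk⟩)
    rw [map_mul, map_mul] at rel
    rwa [cycL_eq K t ℓ κ hj, cycL_eq K t ℓ κ hk]
  braid r hr := by
    have rel := RingQuot.mkAlgHom_rel K (HeckeRel.braid (t := t) (ℓ := ℓ) (κ := κ)
      (⟨r, by omega⟩ : Fin (n - 1)) ⟨r + 1, by omega⟩ rfl)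
    simp only [map_mul] at rel
    rwa [cycT_eq K t ℓ κ (Nat.lt_of_succ_lt hr), cycT_eq K t ℓ κ hr]
  commute_of_ne r k hr hk hkr hkr' := by
    have rel := RingQuot.mkAlgHom_rel K (HeckeRel.TL (t := t) (ℓ := ℓ) (κ := κ)
      (⟨r, Nat.lt_sub_of_add_lt hr⟩ : Fin (n - 1)) ⟨k, hk⟩ ⟨hkr, hkr'⟩)
    rw [map_mul, map_mul] at rel
    rw [cycL_eq K t ℓ κ hk, cycT_eq K t ℓ κ hr]
    exact rel.symm
  succ_mul r hr := by
    have rel := RingQuot.mkAlgHom_rel K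
      (HeckeRel.LT (t := t) (ℓ := ℓ) (κ := κ) ⟨r, Nat.lt_sub_of_add_lt hr⟩)
    simp only [map_mul, map_add, map_sub, map_one, AlgHom.commutes] at rel
    rwa [cycL_eq K t ℓ κ hr, cycL_eq K t ℓ κ (Nat.lt_of_succ_lt hr), cycT_eq K t ℓ κ hr]

end CycHecke

section Seminormal

variable {K : Type*} [Field K] {t : Kˣ} {n ℓ : ℕ} {κ : ℕ → ℤ}

/-- The simultaneous left eigenspace of `L_1, …, L_n` whose eigenvalues are the quantum contents
of `T`. -/
noncomputable def tableauSpace (κ : ℕ → ℤ) (t : Kˣ) (T : StdTableau ℓ n) :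
    Submodule K (CycHecke K t n ℓ κ) :=
  ⨅ k, Module.End.eigenspace (LinearMap.mulLeft K (Lgen K t n ℓ κ k)) (quantumContents κ t T k)

lemma mem_tableauSpace {T : StdTableau ℓ n} {v : CycHecke K t n ℓ κ} :
    v ∈ tableauSpace κ t T ↔ ∀ k, Lgen K t n ℓ κ k * v = quantumContents κ t T k • v := by
  simp only [tableauSpace, Submodule.mem_iInf, Module.End.mem_eigenspace_iff,
    LinearMap.mulLeft_apply]

lemma actsBy_Lgen (k : Fin n) : ActsBy (tableauSpace κ t) (Lgen K t n ℓ κ k)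
    (fun T => quantumContents κ t T k) :=
  fun _ _ hv => mem_tableauSpace.1 hv k

lemma iSup_tableauSpace (hs : SeparatesU t n ℓ κ) :
    ⨆ T : StdTableau ℓ n, tableauSpace κ t T = ⊤ := by
  have hecke := (heckeRelations_cycHecke K t (n := n) ℓ κ).mulLeft
  refine hecke.eq_top_of_forall_weightSpace_le hs fun N hN v hv =>
    Submodule.mem_iSup_of_mem (StdTableau.ofPath hN) (mem_tableauSpace.2 fun k => ?_)
  have eigen := mem_weightSpace.1 hv k k.2
  rwa [Function.comp_apply, cycL_eq K t ℓ κ k.2, contentWeight, ← StdTableau.node_ofPath hN k.2]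
    at eigen

lemma actsBy_Fidem (hs : SeparatesU t n ℓ κ) (T : StdTableau ℓ n) :
    ActsBy (tableauSpace κ t) (Fidem K t n ℓ κ T) (fun S => if S = T then 1 else 0) := by
  have acts : ActsBy (tableauSpace κ t) (Fidem K t n ℓ κ T) fun S =>
      ((List.finRange n).map fun k => (((contFinset ℓ n κ).sort (· ≤ ·)).map fun c =>
        if qint (t : K) (content κ T (k.1 + 1)) ≠ qint (t : K) c then
          (quantumContents κ t S k - qint (t : K) c) *
            (qint (t : K) (content κ T (k.1 + 1)) - qint (t : K) c)⁻¹
        else 1).prod).prod := by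
    refine ActsBy.list_prod (fun k => ActsBy.list_prod (fun c => ?_) _) _
    split_ifs
    · exact ((actsBy_Lgen k).sub (.const _)).mul (.const _)
    · exact .one
  convert acts using 2 with S
  simp only [quantumContents, qint_eq_qintU]
  symm
  split_ifs with hST
  · subst hST
    refine List.prod_eq_one ?_
    simp only [List.mem_map, forall_exists_index, and_imp, forall_apply_eq_imp_iff₂]
    refine fun k _ => List.prod_eq_one ?_
    simp only [List.mem_map, forall_exists_index, and_imp, forall_apply_eq_imp_iff₂]
    intro c _
    split_ifs with hc
    · exact mul_inv_cancel₀ (sub_ne_zero.2 hc)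
    · rfl
  · obtain ⟨k, hk, hne⟩ : ∃ k, ∃ _ : k < n,
        qintU t (content κ S (k + 1)) ≠ qintU t (content κ T (k + 1)) := by
      contrapose! hST
      exact StdTableau.eq_of_qintU_content_eq hs hST
    refine List.prod_eq_zero (List.mem_map.2 ⟨⟨k, hk⟩, List.mem_finRange _, ?_⟩)
    refine List.prod_eq_zero (List.mem_map.2 ⟨content κ S (k + 1),
      (Finset.mem_sort _).2 (StdTableau.content_mem_contFinset κ S hk), ?_⟩)
    rw [if_pos hne.symm, sub_self, zero_mul]

lemma actsBy_finsum_Fidem (hs : SeparatesU t n ℓ κ) {P : StdTableau ℓ n → Prop}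
    {c f : StdTableau ℓ n → K} (hf : ∀ S, P S → f S = c S) (hf' : ∀ S, ¬P S → f S = 0) :
    ActsBy (tableauSpace κ t)
      (∑ᶠ T : {T // P T}, algebraMap K (CycHecke K t n ℓ κ) (c T.1) * Fidem K t n ℓ κ T.1) f := by
  have := Fintype.ofFinite {T // P T}
  rw [finsum_eq_sum_of_fintype]
  convert ActsBy.sum (fun T : {T // P T} => (ActsBy.const (c T.1)).mul (actsBy_Fidem hs T.1))
    Finset.univ using 2 with S
  by_cases hS : P S
  · rw [hf S hS, Finset.sum_eq_single_of_mem ⟨S, hS⟩ (Finset.mem_univ _) fun T _ hT => ?_,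
      if_pos rfl, mul_one]
    rw [if_neg fun hST => hT (Subtype.ext hST.symm), mul_zero]
  · rw [hf' S hS]
    refine (Finset.sum_eq_zero fun T _ => ?_).symm
    rw [if_neg fun hST : S = T => hS (hST ▸ T.2), mul_zero]

end Seminormal

theorem renormalised_idempotent_integral_general (n ℓ e : ℕ) (κ : ℕ → ℤ) (K : Type*) [Field K]
    (O : Subring K) (t : Oˣ) (hs : SeparatesU t n ℓ κ)
    (ht : ∀ k : ℤ, ¬(e : ℤ) ∣ k → IsUnit (qintU t k))
    (tK : Kˣ) (htK : tK = Units.map O.subtype.toMonoidHom t)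
    [Algebra O (CycHecke K tK n ℓ κ)]
    (hcompat : ∀ o : O,
      algebraMap O (CycHecke K tK n ℓ κ) o = algebraMap K (CycHecke K tK n ℓ κ) (o : K))
    (i : Fin n → ZMod e) (φ : MvPolynomial (Fin n) O)
    (hφ : ∀ T : StdTableau ℓ n, resSeq e κ T = i →
      IsUnit (MvPolynomial.eval (fun k => qintU t (content κ T (k.1 + 1))) φ)) :
    (∑ᶠ T : {T : StdTableau ℓ n // resSeq e κ T = i},
        algebraMap K (CycHecke K tK n ℓ κ)
          (((MvPolynomial.eval (fun k => qintU t (content κ T.1 (k.1 + 1))) φ : O) : K)⁻¹) *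
          Fidem K tK n ℓ κ T.1) ∈
      Algebra.adjoin O {h : CycHecke K tK n ℓ κ | ∃ k : Fin n, h = Lgen K tK n ℓ κ k} := by
  have hsK : SeparatesU tK n ℓ κ := htK ▸ hs.map O.subtype
  have coe_contents (T : StdTableau ℓ n) (k : Fin n) :
      algebraMap O K (quantumContents κ t T k) = quantumContents κ tK T k := by
    subst htK
    exact map_qintU t O.subtype _
  obtain ⟨ψ, hψ, hψ'⟩ := exists_eval_eq_inv_on (c := quantumContents κ t) hφ
    (fun T => isUnit_eval_residuePolynomial ht) (fun T => eval_residuePolynomial_of_ne)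
  obtain ⟨x, hx, hxψ⟩ := ActsBy.exists_mem_eval (E := tableauSpace κ tK) hcompat
    (A := Algebra.adjoin O {h | ∃ k : Fin n, h = Lgen K tK n ℓ κ k}) (x := Lgen K tK n ℓ κ)
    (fun k => Algebra.subset_adjoin ⟨k, rfl⟩) (c := quantumContents κ t)
    (fun k => by simpa only [coe_contents] using actsBy_Lgen k) ψ
  have acts := actsBy_finsum_Fidem hsK (P := (resSeq e κ · = i))
    (c := fun T => ((MvPolynomial.eval (quantumContents κ t T) φ : O) : K)⁻¹)
    (fun T hT => (inv_eq_of_mul_eq_one_right (congrArg O.subtype (hψ T hT))).symm)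
    (fun T hT => congrArg O.subtype (hψ' T hT))
  exact Set.mem_of_eq_of_mem (acts.eq (iSup_tableauSpace hsK) hxψ) hx

/-- Proposition P:Invertible: for a polynomial `φ ∈ O[X_1, …, X_n]`
taking unit values on the contents of all tableaux in `Std(i)`, the renormalised
idempotent `f_i^φ = Σ_{T ∈ Std(i)} φ(T)^{-1} F_T` lies in the `O`-subalgebra of
`H_n(K, t, κ)` generated by `L_1, …, L_n`. -/
theorem renormalised_idempotent_integral (n ℓ e : ℕ) (hℓ : 1 ≤ ℓ) (he : 2 ≤ e)
    (κ : ℕ → ℤ) (hκ : ∀ l, l + 1 < ℓ → (n : ℤ) ≤ κ l - κ (l + 1))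
    (K : Type) [Field K] (O : Subring K) (t : Oˣ)
    (hO : IsIdempotentSubring O t e n ℓ κ)
    (tK : Kˣ) (htK : tK = Units.map O.subtype.toMonoidHom t)
    [instO : Algebra ↥O (CycHecke K tK n ℓ κ)]
    (hcompat : ∀ o : ↥O,
      algebraMap ↥O (CycHecke K tK n ℓ κ) o = algebraMap K (CycHecke K tK n ℓ κ) (o : K))
    (i : Fin n → ZMod e) (φ : MvPolynomial (Fin n) ↥O)
    (hφ : ∀ T : StdTableau ℓ n, resSeq e κ T = i →
      IsUnit (MvPolynomial.eval (fun k => qintU t (content κ T (k.1 + 1))) φ)) :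
    (∑ᶠ T : {T : StdTableau ℓ n // resSeq e κ T = i},
        algebraMap K (CycHecke K tK n ℓ κ)
          (((MvPolynomial.eval (fun k => qintU t (content κ T.1 (k.1 + 1))) φ : ↥O) : K)⁻¹) *
          Fidem K tK n ℓ κ T.1) ∈
      Algebra.adjoin ↥O {h : CycHecke K tK n ℓ κ | ∃ k : Fin n, h = Lgen K tK n ℓ κ k} :=
  renormalised_idempotent_integral_general n ℓ e κ K O t hO.1 hO.2.1 tK htK hcompat i φ hφ

end Paper
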